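/- Let 𝒳={1,…,c}, μ a probability measure on 𝒳 with μ_r>0 for every r, and X₁,…,Xₙ i.i.d. μ. Suppose δ_□(W_{Qₙ},W)→0 for some W∈𝒲 and limsup_{n→∞}‖W_{Qₙ}‖_{qΔ}<∞ for some q>1. Then for every θ∈ℝ, Z_n^{(2)}(θ) := (1/n)log E_{μ^{⊗n}}[e^{nθ·N₂(H,Qₙ,X)}] converges, as n→∞, to sup{ θ·G_{2,W}(f) − ∫₀¹ Σ_{r=1}^c f_r(u) log(f_r(u)/μ_r) du : f∈ℱ_c }. -/

import Mathlib

open MeasureTheory Filter Set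
open scoped ENNReal NNReal

noncomputable section

/-- The uniform probability measure on `[0,1]`. -/
def unif01 : Measure ℝ := volume.restrict (Set.Icc 0 1)

instance : IsProbabilityMeasure unif01 :=
  ⟨by rw [unif01, Measure.restrict_apply_univ, Real.volume_Icc]; norm_num⟩

/-- The `L^r` norm (`r : ℝ≥0∞`) of a kernel, viewed as a function on `[0,1]²`. -/
def kerNorm (W : ℝ → ℝ → ℝ) (r : ℝ≥0∞) : ℝ≥0∞ :=
  eLpNorm (fun z : ℝ × ℝ => W z.1 z.2) r (unif01.prod unif01)

/-- The (strong) cut distance `d_□` between two kernels on `[0,1]²`. -/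
def cutDist (W₁ W₂ : ℝ → ℝ → ℝ) : ℝ :=
  ⨆ S : {S : Set ℝ // MeasurableSet S}, ⨆ T : {T : Set ℝ // MeasurableSet T},
    |∫ x in Set.Icc (0:ℝ) 1 ∩ S.1, ∫ y in Set.Icc (0:ℝ) 1 ∩ T.1, (W₁ x y - W₂ x y)|

/-- A Lebesgue-measure-preserving bijection of `[0,1]`. -/
def MPB (σ : ℝ → ℝ) : Prop :=
  Set.BijOn σ (Set.Icc 0 1) (Set.Icc 0 1) ∧ MeasurePreserving σ unif01 unif01

/-- The weak cut distance `δ_□`. -/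
def weakCutDist (W₁ W₂ : ℝ → ℝ → ℝ) : ℝ :=
  ⨅ σ : {σ : ℝ → ℝ // MPB σ}, cutDist (fun x y => W₁ (σ.1 x) (σ.1 y)) W₂

/-- The step kernel `W_{Q_n}` associated to an `n × n` matrix `Q`:
it equals `Q i j` when `⌈n x⌉ = i, ⌈n y⌉ = j`. -/
def stepKernel (n : ℕ) (Q : Fin n → Fin n → ℝ) : ℝ → ℝ → ℝ := fun x y =>
  ∑ i : Fin n, ∑ j : Fin n,
    if x ∈ Set.Ioc (((i : ℕ) : ℝ)/n) ((((i : ℕ) : ℝ)+1)/n) ∧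
       y ∈ Set.Ioc (((j : ℕ) : ℝ)/n) ((((j : ℕ) : ℝ)+1)/n)
    then Q i j else 0

/-- Product over the edges of `H` (each edge counted once) of `f a b`. -/
def edgeProd {v : ℕ} (G : SimpleGraph (Fin v)) [DecidableRel G.Adj]
    (f : Fin v → Fin v → ℝ) : ℝ :=
  ∏ p ∈ Finset.univ.filter (fun p : Fin v × Fin v => G.Adj p.1 p.2 ∧ p.1 < p.2), f p.1 p.2

/-- The number of edges `|E(H)|`. -/
def edgeCard {v : ℕ} (G : SimpleGraph (Fin v)) [DecidableRel G.Adj] : ℕ :=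
  (Finset.univ.filter (fun p : Fin v × Fin v => G.Adj p.1 p.2 ∧ p.1 < p.2)).card

/-- The inhomogeneous U-statistic `U_n(X)` (sum over distinct indices). -/
def Ustat {X : Type*} {v : ℕ} (G : SimpleGraph (Fin v)) [DecidableRel G.Adj]
    (φ : (Fin v → X) → ℝ) (n : ℕ) (Q : Fin n → Fin n → ℝ) (x : Fin n → X) : ℝ :=
  (∑ i ∈ Finset.univ.filter (fun i : Fin v → Fin n => Function.Injective i),
      φ (x ∘ i) * edgeProd G (fun a b => Q (i a) (i b))) / (n : ℝ) ^ v

/-- The inhomogeneous V-statistic `V_n(X)` (sum over all indices). -/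
def Vstat {X : Type*} {v : ℕ} (G : SimpleGraph (Fin v)) [DecidableRel G.Adj]
    (φ : (Fin v → X) → ℝ) (n : ℕ) (Q : Fin n → Fin n → ℝ) (x : Fin n → X) : ℝ :=
  (∑ i : Fin v → Fin n, φ (x ∘ i) * edgeProd G (fun a b => Q (i a) (i b))) / (n : ℝ) ^ v

open Classical in
/-- Kullback-Leibler divergence `D(ν | ρ) ∈ [0,∞]`. -/
def KLdiv {α : Type*} [MeasurableSpace α] (ν ρ : Measure α) : ℝ≥0∞ :=
  if ν ≪ ρ ∧ Integrable (llr ν ρ) ν then ENNReal.ofReal (∫ a, llr ν ρ a ∂ν) else ⊤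

open Classical in
/-- `ν` itself if it is a probability measure, junk value `0` otherwise. -/
def probOr {α : Type*} [MeasurableSpace α] (ν : Measure α) : Measure α :=
  if IsProbabilityMeasure ν then ν else 0

instance {α : Type*} [MeasurableSpace α] (ν : Measure α) : SigmaFinite (probOr ν) := by
  unfold probOr
  split_ifs with h
  · haveI := h; infer_instance
  · infer_instance

/-- `v`-fold product of a (probability) measure. -/
def piProb {α : Type*} [MeasurableSpace α] (v : ℕ) (ν : Measure α) : Measure (Fin v → α) :=
  Measure.pi fun _ => probOr ν

/-- The functional `T_{W,φ}(ν) = E[φ(B₁,…,B_v) ∏_{(a,b) ∈ E(H)} W(A_a,A_b)]`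
for `(A_a,B_a)` i.i.d. with law `ν`. -/
def TWphi {X : Type*} [MeasurableSpace X] {v : ℕ} (G : SimpleGraph (Fin v))
    [DecidableRel G.Adj] (W : ℝ → ℝ → ℝ) (φ : (Fin v → X) → ℝ)
    (ν : Measure (ℝ × X)) : ℝ :=
  ∫ z : Fin v → ℝ × X,
    φ (fun a => (z a).2) * edgeProd G (fun a b => W (z a).1 (z b).1) ∂(piProb v ν)

/-- Membership in `𝒯ℳ`: probability measures on `[0,1] × 𝒳` whose first marginal
is uniform on `[0,1]`. -/
def inTM {X : Type*} [MeasurableSpace X] (ν : Measure (ℝ × X)) : Prop :=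
  IsProbabilityMeasure ν ∧ ν.map Prod.fst = unif01

/-- The rate function `I₀(t) = inf { D(ν|ρ) : ν ∈ 𝒯ℳ, D(ν|ρ) < ∞, T_{W,φ}(ν) = t }`. -/
def rate0 {X : Type*} [MeasurableSpace X] {v : ℕ} (G : SimpleGraph (Fin v))
    [DecidableRel G.Adj] (W : ℝ → ℝ → ℝ) (φ : (Fin v → X) → ℝ) (μ : Measure X)
    (t : ℝ) : ℝ≥0∞ :=
  ⨅ ν : {ν : Measure (ℝ × X) //
      inTM ν ∧ KLdiv ν (unif01.prod μ) ≠ ⊤ ∧ TWphi G W φ ν = t},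
    KLdiv ν.1 (unif01.prod μ)

/-- Tail assumption (T): `E_μ[e^{λ ψ(X)^p}] < ∞` for all `λ > 0`; for `p = ∞`
it means `ψ` is bounded. -/
def TailCond {X : Type*} [MeasurableSpace X] (μ : Measure X) (ψ : X → ℝ)
    (p : ℝ≥0∞) : Prop :=
  if p = ⊤ then ∃ C : ℝ, ∀ x, ψ x ≤ C
  else ∀ lam : ℝ, 0 < lam →
    ∫⁻ x, ENNReal.ofReal (Real.exp (lam * ψ x ^ p.toReal)) ∂μ < ⊤

/-- A sequence of random elements `T n` defined on probability spaces `(Ω n, P n)`,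
taking values in a topological space `E`, satisfies a large deviation principle at
speed `n` with good rate function `I`. -/
def SatisfiesLDP {E : Type*} [TopologicalSpace E] {Ω : ℕ → Type*}
    [∀ n, MeasurableSpace (Ω n)] (P : ∀ n, Measure (Ω n)) (T : ∀ n, Ω n → E)
    (I : E → ℝ≥0∞) : Prop :=
  (∀ c : ℝ≥0∞, c ≠ ⊤ → IsCompact {x | I x ≤ c}) ∧
  ∀ F : Set E, MeasurableSet[borel E] F →
    (-(⨅ x ∈ interior F, (I x : EReal)) ≤
      Filter.atTop.liminf fun n : ℕ =>
        (((n : ℝ)⁻¹ : ℝ) : EReal) * ENNReal.log (P n {ω | T n ω ∈ F})) ∧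
    (Filter.atTop.limsup (fun n : ℕ =>
        (((n : ℝ)⁻¹ : ℝ) : EReal) * ENNReal.log (P n {ω | T n ω ∈ F})) ≤
      -(⨅ x ∈ closure F, (I x : EReal)))

end
/-- The log-normalizing constant `Z_n(θ) = (1/n) log E_{μ^{⊗n}}[e^{nθ f_n(X)}]`. -/
noncomputable def ZnGen {X : Type*} [MeasurableSpace X] (μ : Measure X)
    [IsProbabilityMeasure μ] (f : ∀ n : ℕ, (Fin n → X) → ℝ) (n : ℕ) (θ : ℝ) : ℝ :=
  (n : ℝ)⁻¹ *
    Real.log (∫ x, Real.exp (n * θ * f n x) ∂(Measure.pi fun _ : Fin n => μ))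

/-- The Gibbs measure `R_{n,θ}` with Hamiltonian `f n`, having density
`exp(nθ f_n(x) − n Z_n(θ))` with respect to `μ^{⊗n}`. -/
noncomputable def GibbsMeasure {X : Type*} [MeasurableSpace X] (μ : Measure X)
    [IsProbabilityMeasure μ] (f : ∀ n : ℕ, (Fin n → X) → ℝ) (n : ℕ) (θ : ℝ) :
    Measure (Fin n → X) :=
  (Measure.pi fun _ : Fin n => μ).withDensity fun x =>
    ENNReal.ofReal (Real.exp (n * θ * f n x - n * ZnGen μ f n θ))

/-- The set `{θ T_{W,φ}(ν) − D(ν|ρ) : ν ∈ 𝒯ℳ, D(ν|ρ) < ∞}` whose supremum is `Z(θ)`. -/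
def Zset {X : Type*} [MeasurableSpace X] {v : ℕ} (G : SimpleGraph (Fin v))
    [DecidableRel G.Adj] (W : ℝ → ℝ → ℝ) (φ : (Fin v → X) → ℝ) (μ : Measure X)
    (θ : ℝ) : Set ℝ :=
  {z : ℝ | ∃ ν : Measure (ℝ × X), inTM ν ∧ KLdiv ν (unif01.prod μ) ≠ ⊤ ∧
    z = θ * TWphi G W φ ν - (KLdiv ν (unif01.prod μ)).toReal}
/-- `φ(x₁,…,x_v) = 1{x₁ = … = x_v}` for monochromatic subgraph counts. -/
def monoPhi (c v : ℕ) : (Fin v → Fin c) → ℝ := fun y =>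
  if ∀ a b : Fin v, y a = y b then 1 else 0

/-- The class `ℱ_c` of measurable `f = (f₁,…,f_c) : [0,1] → [0,1]^c`
with `Σ_r f_r(x) = 1`. -/
def Fc (c : ℕ) : Set (ℝ → Fin c → ℝ) :=
  {f | Measurable f ∧ (∀ u ∈ Set.Icc (0 : ℝ) 1, ∀ r, f u r ∈ Set.Icc (0 : ℝ) 1) ∧
    ∀ u ∈ Set.Icc (0 : ℝ) 1, ∑ r, f u r = 1}

/-- `G_{2,W}(f) = Σ_r ∫_{[0,1]^v} ∏_{(a,b) ∈ E(H)} W(x_a,x_b) ∏_a f_r(x_a) dx`. -/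
noncomputable def G2 {v : ℕ} (c : ℕ) (G : SimpleGraph (Fin v)) [DecidableRel G.Adj]
    (W : ℝ → ℝ → ℝ) (f : ℝ → Fin c → ℝ) : ℝ :=
  ∑ r : Fin c,
    ∫ x : Fin v → ℝ, edgeProd G (fun a b => W (x a) (x b)) * ∏ a, f (x a) r
      ∂(Measure.pi fun _ : Fin v => unif01)

/-- The relative entropy `∫₀¹ Σ_r f_r(u) log (f_r(u)/μ_r) du`. -/
noncomputable def entPotts (c : ℕ) (μ : Measure (Fin c)) (f : ℝ → Fin c → ℝ) : ℝ :=
  ∫ u, (∑ r, f u r * Real.log (f u r / (μ {r}).toReal)) ∂unif01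

/-- The rate function `I₂` for monochromatic subgraph counts. -/
noncomputable def rate2 {v : ℕ} (c : ℕ) (G : SimpleGraph (Fin v)) [DecidableRel G.Adj]
    (W : ℝ → ℝ → ℝ) (μ : Measure (Fin c)) (t : ℝ) : ℝ≥0∞ :=
  ⨅ f : {f : ℝ → Fin c → ℝ // f ∈ Fc c ∧ G2 c G W f = t},
    ENNReal.ofReal (entPotts c μ f.1)

/-!
Write `Φ f` for the energy `∑ᵣ t(H, W; fᵣ)` of a colour profile `f`. Hölder's inequality of Finner
type bounds the integral of a product over the edges of `H` by the `L^Δ` norms of its factors; the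
extra exponent `q > 1` makes truncation uniform, so `Φ` is cut-continuous in `W` on balls of
`L^{qΔ}`, uniformly in `f`. The same truncation shows that tuples with repeated indices do not
matter.

For the lower bound, insert into the Gibbs variational principle the product measure whose `i`-th
factor is the average of `f` over the `i`-th cell; convexity of `x log x` controls the entropy.

For the upper bound, replace `W` by its block averages: the energy then depends only on finitely
many cell masses of `f`, which range over a compact set, so finitely many convex classes of profiles
cover everything with small oscillation of `Φ` on each. Conditioning an i.i.d. configuration on a
convex class, the vector of one-site marginals stays in the class, and subadditivity of entropy
bounds the probability of the class by the entropy of that profile.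
-/

section Finner

theorem lintegral_prod_rpow_inv_le {α ι : Type*} [MeasurableSpace α] {μ : Measure α}
    [IsProbabilityMeasure μ] {D : ℕ} (hD : 0 < D) {s : Finset ι} (hs : s.card ≤ D)
    {f : ι → α → ℝ≥0∞} (hf : ∀ i ∈ s, AEMeasurable (f i) μ) :
    ∫⁻ a, ∏ i ∈ s, f i a ^ ((D : ℝ)⁻¹) ∂μ ≤ ∏ i ∈ s, (∫⁻ a, f i a ∂μ) ^ ((D : ℝ)⁻¹) := by
  have hcard : s.card * (D : ℝ)⁻¹ ≤ 1 := by
    rw [← div_eq_mul_inv, div_le_one (by exact_mod_cast hD)]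
    exact_mod_cast hs
  simpa using ENNReal.lintegral_mul_prod_norm_pow_le s (g := fun _ => 1) aemeasurable_const hf
    (1 - s.card * (D : ℝ)⁻¹) (p := fun _ => (D : ℝ)⁻¹) (by simp) (by linarith)
    fun _ _ => by positivity

variable {δ : Type*} [DecidableEq δ] {X : δ → Type*} [∀ i, MeasurableSpace (X i)]
  {μ : ∀ i, Measure (X i)} [∀ i, IsProbabilityMeasure (μ i)]

theorem lmarginal_update_of_dependsOn {f : (∀ i, X i) → ℝ≥0∞} (hf : Measurable f)
    {t s : Finset δ} (hdep : DependsOn f (t : Set δ)) {i : δ} (his : i ∉ s) (hit : i ∉ t)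
    (x : ∀ i, X i) (y : X i) :
    lmarginal μ s f (Function.update x i y) = lmarginal μ s f x := by
  rw [lmarginal_update_of_notMem hf his]
  congr 1
  funext z
  refine hdep fun j hj => Function.update_of_ne ?_ _ _
  rintro rfl
  exact hit hj

/-- Finner's inequality. Integrating out one more variable only affects the factors that depend on
it; there are at most `D` of them, so Hölder's inequality with exponents `D` applies. -/
theorem lmarginal_prod_rpow_inv_le {ι : Type*} {D : ℕ} (hD : 0 < D) {E : Finset ι}
    {f : ι → (∀ i, X i) → ℝ≥0∞} (hf : ∀ j, Measurable (f j)) {t : ι → Finset δ}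
    (hdep : ∀ j, DependsOn (f j) (t j : Set δ)) (hdeg : ∀ i, (E.filter (i ∈ t ·)).card ≤ D)
    (s : Finset δ) (x : ∀ i, X i) :
    lmarginal μ s (fun x => ∏ j ∈ E, f j x ^ ((D : ℝ)⁻¹)) x
      ≤ ∏ j ∈ E, lmarginal μ s (f j) x ^ ((D : ℝ)⁻¹) := by
  induction s using Finset.induction generalizing x with
  | empty => simp
  | insert i s hi ih =>
    rw [lmarginal_insert _ (Finset.measurable_prod _ fun j _ => (hf j).pow_const _) hi]
    set g : ι → X i → ℝ≥0∞ := fun j y => lmarginal μ s (f j) (Function.update x i y)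
    have hg : ∀ j, Measurable (g j) := fun j => ((hf j).lmarginal μ).comp (measurable_update x)
    have hconst : ∀ j, i ∉ t j → g j = fun _ => lmarginal μ s (f j) x := fun j hj =>
      funext (lmarginal_update_of_dependsOn (hf j) (hdep j) hi hj x)
    have hsplit := fun F : ι → ℝ≥0∞ => Finset.prod_filter_not_mul_prod_filter E (i ∈ t ·) F
    calc ∫⁻ y, lmarginal μ s (fun x => ∏ j ∈ E, f j x ^ ((D : ℝ)⁻¹)) (Function.update x i y) ∂μ i
        ≤ ∫⁻ y, ∏ j ∈ E, g j y ^ ((D : ℝ)⁻¹) ∂μ i := lintegral_mono fun y => ih _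
      _ = ∫⁻ y, (∏ j ∈ E with i ∉ t j, lmarginal μ s (f j) x ^ ((D : ℝ)⁻¹)) *
            ∏ j ∈ E with i ∈ t j, g j y ^ ((D : ℝ)⁻¹) ∂μ i := by
          refine lintegral_congr fun y => ?_
          rw [← hsplit]
          congr 1
          exact Finset.prod_congr rfl fun j hj => by rw [hconst j (Finset.mem_filter.1 hj).2]
      _ = (∏ j ∈ E with i ∉ t j, lmarginal μ s (f j) x ^ ((D : ℝ)⁻¹)) *
            ∫⁻ y, ∏ j ∈ E with i ∈ t j, g j y ^ ((D : ℝ)⁻¹) ∂μ i :=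
          lintegral_const_mul _ (Finset.measurable_prod _ fun j _ => (hg j).pow_const _)
      _ ≤ (∏ j ∈ E with i ∉ t j, lmarginal μ s (f j) x ^ ((D : ℝ)⁻¹)) *
            ∏ j ∈ E with i ∈ t j, (∫⁻ y, g j y ∂μ i) ^ ((D : ℝ)⁻¹) := by
          gcongr
          exact lintegral_prod_rpow_inv_le hD (hdeg i) fun j _ => (hg j).aemeasurable
      _ = ∏ j ∈ E, lmarginal μ (insert i s) (f j) x ^ ((D : ℝ)⁻¹) := by
          rw [← hsplit]
          congr 1
          · refine Finset.prod_congr rfl fun j hj => ?_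
            rw [lmarginal_insert _ (hf j) hi]
            change _ = (∫⁻ y, g j y ∂μ i) ^ _
            simp [hconst j (Finset.mem_filter.1 hj).2]
          · exact Finset.prod_congr rfl fun j _ => by rw [lmarginal_insert _ (hf j) hi]

end Finner

section ProductMeasure

variable {ι : Type*} [Fintype ι] {X : ι → Type*} [∀ i, MeasurableSpace (X i)]
  (μ : ∀ i, Measure (X i)) [∀ i, IsProbabilityMeasure (μ i)]

theorem measurePreserving_eval_pair {a b : ι} (hab : a ≠ b) :
    MeasurePreserving (fun x : ∀ i, X i => (x a, x b)) (Measure.pi μ) ((μ a).prod (μ b)) := by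
  have ha := measurable_pi_apply (X := X) a
  have hb := measurable_pi_apply (X := X) b
  have hindep := (ProbabilityTheory.iIndepFun_pi (μ := μ) (X := fun _ x => x)
    fun i => aemeasurable_id).indepFun hab
  rw [ProbabilityTheory.indepFun_iff_map_prod_eq_prod_map_map ha.aemeasurable hb.aemeasurable,
    (measurePreserving_eval μ a).map_eq, (measurePreserving_eval μ b).map_eq] at hindep
  exact ⟨ha.prodMk hb, hindep⟩

variable [DecidableEq ι]

theorem measurePreserving_update_prod (a : ι) :
    MeasurePreserving (fun p : (∀ i, X i) × X a => Function.update p.1 a p.2)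
      ((Measure.pi μ).prod (μ a)) (Measure.pi μ) := by
  refine ⟨measurable_update', (Measure.pi_eq fun s hs => ?_).symm⟩
  have hpre : (fun p : (∀ i, X i) × X a => Function.update p.1 a p.2) ⁻¹' univ.pi s
      = univ.pi (Function.update s a univ) ×ˢ s a := by
    ext p
    rw [mem_preimage, update_mem_pi_iff, mem_prod, forall_prop_of_true (mem_univ a)]
    refine and_congr_left fun _ => forall_congr' fun i => ?_
    rcases eq_or_ne i a with rfl | hi <;> simp [*]
  rw [Measure.map_apply measurable_update' (MeasurableSet.univ_pi hs), hpre, Measure.prod_prod,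
    Measure.pi_pi, mul_comm, ← Finset.mul_prod_erase _ (fun i => μ i (s i)) (Finset.mem_univ a),
    ← Finset.mul_prod_erase _ _ (Finset.mem_univ a), Function.update_self, measure_univ, one_mul]
  congr 1
  exact Finset.prod_congr rfl fun i hi => by
    rw [Function.update_of_ne (Finset.ne_of_mem_erase hi)]

theorem measurePreserving_update_update_prod (a b : ι) :
    MeasurePreserving (fun p : (∀ i, X i) × X a × X b =>
        Function.update (Function.update p.1 a p.2.1) b p.2.2)
      ((Measure.pi μ).prod ((μ a).prod (μ b))) (Measure.pi μ) :=
  ((measurePreserving_update_prod μ b).comp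
    ((measurePreserving_update_prod μ a).prod (MeasurePreserving.id (μ b)))).comp
    (measurePreserving_prodAssoc (Measure.pi μ) (μ a) (μ b)).symm

end ProductMeasure

section Edges

variable {v : ℕ} (G : SimpleGraph (Fin v)) [DecidableRel G.Adj]

/-- The edges of `G`, each encoded once as an increasing pair: the index set of `edgeProd`. -/
def edgePairs : Finset (Fin v × Fin v) :=
  Finset.univ.filter fun p => G.Adj p.1 p.2 ∧ p.1 < p.2

variable {G}

theorem mem_edgePairs {p : Fin v × Fin v} : p ∈ edgePairs G ↔ G.Adj p.1 p.2 ∧ p.1 < p.2 := by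
  simp [edgePairs]

theorem card_filter_edgePairs_incident_le (i : Fin v) :
    ((edgePairs G).filter fun p => i ∈ ({p.1, p.2} : Finset (Fin v))).card ≤ G.maxDegree := by
  refine le_trans ?_ (G.degree_le_maxDegree i)
  rw [← SimpleGraph.card_neighborFinset_eq_degree]
  refine Finset.card_le_card_of_injOn (fun p => if p.1 = i then p.2 else p.1) ?_ ?_
  · intro p hp
    simp only [Finset.coe_filter, mem_edgePairs, Finset.mem_insert, Finset.mem_singleton,
      mem_ofPred_eq] at hp
    simp only [Finset.mem_coe, SimpleGraph.mem_neighborFinset]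
    grind [SimpleGraph.Adj.symm]
  · rintro ⟨a, b⟩ hp ⟨a', b'⟩ hp' h
    simp only [Finset.coe_filter, mem_edgePairs, Finset.mem_insert, Finset.mem_singleton,
      mem_ofPred_eq] at hp hp'
    dsimp only at h
    split_ifs at h <;> grind

variable {α : Type*} [MeasurableSpace α] {ρ : Measure α} [IsProbabilityMeasure ρ] {D : ℕ}

theorem measurable_eval_pair (p : Fin v × Fin v) :
    Measurable fun x : Fin v → α => (x p.1, x p.2) :=
  (measurable_pi_apply _).prodMk (measurable_pi_apply _)

theorem lintegral_prod_edgePairs_le (hD : 0 < D) (hG : G.maxDegree ≤ D)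
    {N : Fin v × Fin v → α × α → ℝ≥0∞} (hN : ∀ p, Measurable (N p)) :
    ∫⁻ x, ∏ p ∈ edgePairs G, N p (x p.1, x p.2) ∂(Measure.pi fun _ => ρ)
      ≤ ∏ p ∈ edgePairs G, eLpNorm (N p) D (ρ.prod ρ) := by
  have hD0 : (D : ℝ) ≠ 0 := by positivity
  rcases isEmpty_or_nonempty (Fin v → α) with _ | ⟨⟨x₀⟩⟩
  · simp [lintegral_of_isEmpty]
  have hfinner := lmarginal_prod_rpow_inv_le (μ := fun _ : Fin v => ρ) hD (E := edgePairs G)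
    (f := fun p x => N p (x p.1, x p.2) ^ (D : ℝ)) (t := fun p => {p.1, p.2})
    (fun p => ((hN p).comp (measurable_eval_pair p)).pow_const _)
    (fun p x y hxy => by simp [hxy p.1 (by simp), hxy p.2 (by simp)])
    (fun i => (card_filter_edgePairs_incident_le i).trans hG) Finset.univ x₀
  simp only [lmarginal_univ, ← ENNReal.rpow_mul, mul_inv_cancel₀ hD0, ENNReal.rpow_one] at hfinner
  refine hfinner.trans_eq (Finset.prod_congr rfl fun p hp => ?_)
  rw [eLpNorm_eq_lintegral_rpow_enorm_toReal (by exact_mod_cast hD.ne') (by simp),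
    ← (measurePreserving_eval_pair (fun _ => ρ) (mem_edgePairs.1 hp).2.ne).map_eq,
    lintegral_map ((hN p).enorm.pow_const _) (measurable_eval_pair p)]
  simp

theorem eLpNorm_prod_edgePairs_le (hD : 0 < D) (hG : G.maxDegree ≤ D) {q : ℝ} (hq : 0 < q)
    {R : Fin v × Fin v → α × α → ℝ} (hR : ∀ p, Measurable (R p)) :
    eLpNorm (fun x => ∏ p ∈ edgePairs G, R p (x p.1, x p.2)) (ENNReal.ofReal q)
        (Measure.pi fun _ => ρ)
      ≤ ∏ p ∈ edgePairs G, eLpNorm (R p) (ENNReal.ofReal q * D) (ρ.prod ρ) := by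
  rw [eLpNorm_eq_lintegral_rpow_enorm_toReal (by simpa using hq) ENNReal.ofReal_ne_top,
    ENNReal.toReal_ofReal hq.le, one_div, ENNReal.rpow_inv_le_iff hq,
    ← ENNReal.prod_rpow_of_nonneg hq.le]
  calc ∫⁻ x, ‖∏ p ∈ edgePairs G, R p (x p.1, x p.2)‖ₑ ^ q ∂(Measure.pi fun _ => ρ)
      = ∫⁻ x, ∏ p ∈ edgePairs G, ‖R p (x p.1, x p.2)‖ₑ ^ q ∂(Measure.pi fun _ => ρ) := by
        simp_rw [enorm_eq_nnnorm, nnnorm_prod, ENNReal.ofNNReal_finsetProd,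
          ENNReal.prod_rpow_of_nonneg hq.le]
    _ ≤ ∏ p ∈ edgePairs G, eLpNorm (fun z => ‖R p z‖ₑ ^ q) D (ρ.prod ρ) :=
        lintegral_prod_edgePairs_le hD hG fun p => (hR p).enorm.pow_const q
    _ = ∏ p ∈ edgePairs G, eLpNorm (R p) (ENNReal.ofReal q * D) (ρ.prod ρ) ^ q := by
        simp_rw [eLpNorm_enorm_rpow _ hq, mul_comm]

end Edges

section CutNorm

variable {α β : Type*} [MeasurableSpace α] [MeasurableSpace β] {ρ : Measure α} {τ : Measure β}

theorem integral_abs_le_of_forall_abs_setIntegral_le {g : α → ℝ} (hgm : Measurable g)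
    (hg : Integrable g ρ) {η : ℝ} (h : ∀ S, MeasurableSet S → |∫ x in S, g x ∂ρ| ≤ η) :
    ∫ x, |g x| ∂ρ ≤ 2 * η := by
  have hpos := h {x | 0 ≤ g x} (measurableSet_le measurable_const hgm)
  have hneg := h {x | g x ≤ 0} (measurableSet_le hgm measurable_const)
  simp_rw [← Real.norm_eq_abs, integral_norm_eq_pos_sub_neg hg]
  linarith [le_of_abs_le hpos, neg_le_of_abs_le hneg]

theorem abs_integral_mul_le_of_forall_abs_setIntegral_le {g B : α → ℝ} (hgm : Measurable g)
    (hg : Integrable g ρ) {η K : ℝ} (h : ∀ S, MeasurableSet S → |∫ x in S, g x ∂ρ| ≤ η)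
    (hK : 0 ≤ K) (hBK : ∀ x, |B x| ≤ K) : |∫ x, g x * B x ∂ρ| ≤ K * (2 * η) :=
  calc |∫ x, g x * B x ∂ρ| ≤ ∫ x, |g x| * K ∂ρ :=
        norm_integral_le_of_norm_le (f := fun x => g x * B x) (hg.abs.mul_const K) <|
          .of_forall fun x => by
            rw [norm_mul]
            exact mul_le_mul_of_nonneg_left (hBK x) (norm_nonneg _)
    _ = K * ∫ x, |g x| ∂ρ := by rw [integral_mul_const, mul_comm]
    _ ≤ K * (2 * η) := by
        gcongr
        exact integral_abs_le_of_forall_abs_setIntegral_le hgm hg h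

/-- The cut norm of `F` is at most `η`; the functions tested against are indicators of measurable
rectangles. -/
def CutNormLE (ρ : Measure α) (F : α × α → ℝ) (η : ℝ) : Prop :=
  ∀ S T, MeasurableSet S → MeasurableSet T → |∫ z in S ×ˢ T, F z ∂(ρ.prod ρ)| ≤ η

variable [SFinite ρ] {F : α × α → ℝ} {η : ℝ}

theorem CutNormLE.abs_integral_mul_mul_le (h : CutNormLE ρ F η) (hFm : Measurable F)
    (hF : Integrable F (ρ.prod ρ)) {B C : α → ℝ} (hB : Measurable B) (hC : Measurable C)
    {K L : ℝ} (hK : 0 ≤ K) (hL : 0 ≤ L) (hBK : ∀ x, |B x| ≤ K) (hCL : ∀ x, |C x| ≤ L) :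
    |∫ z, F z * (B z.1 * C z.2) ∂(ρ.prod ρ)| ≤ K * L * (4 * η) := by
  have hFC : Integrable (fun z => F z * C z.2) (ρ.prod ρ) :=
    hF.mul_bdd (c := L) (hC.comp measurable_snd).aestronglyMeasurable (.of_forall fun z => hCL z.2)
  have hcols : ∀ S, MeasurableSet S → |∫ x in S, ∫ y, F (x, y) * C y ∂ρ ∂ρ| ≤ L * (2 * η) := by
    intro S hS
    have hres : (ρ.restrict S).prod ρ = (ρ.prod ρ).restrict (S ×ˢ univ) := by
      rw [← Measure.prod_restrict, Measure.restrict_univ]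
    have hFS : Integrable F ((ρ.restrict S).prod ρ) := hres ▸ hF.restrict
    rw [integral_integral_swap (hres ▸ hFC.restrict)]
    simp_rw [integral_mul_const]
    refine abs_integral_mul_le_of_forall_abs_setIntegral_le
      hFm.stronglyMeasurable.integral_prod_left'.measurable hFS.integral_prod_right
      (fun T hT => ?_) hL hCL
    convert h S T hS hT using 2
    rw [← Measure.prod_restrict, integral_prod_symm _ ?_]
    rw [Measure.prod_restrict]
    exact hF.restrict
  have hFBC : Integrable (fun z => F z * (B z.1 * C z.2)) (ρ.prod ρ) :=
    hF.mul_bdd (c := K * L) ((hB.comp measurable_fst).mul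
      (hC.comp measurable_snd)).aestronglyMeasurable <| .of_forall fun z => by
        rw [norm_mul]
        exact mul_le_mul (hBK z.1) (hCL z.2) (norm_nonneg _) hK
  calc |∫ z, F z * (B z.1 * C z.2) ∂(ρ.prod ρ)|
      = |∫ x, (∫ y, F (x, y) * C y ∂ρ) * B x ∂ρ| := by
        rw [integral_prod _ hFBC]
        simp_rw [← integral_mul_const, mul_assoc, mul_comm (C _)]
    _ ≤ K * (2 * (L * (2 * η))) :=
        abs_integral_mul_le_of_forall_abs_setIntegral_le
          (hFm.mul (hC.comp measurable_snd)).stronglyMeasurable.integral_prod_right'.measurable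
          hFC.integral_prod_left hcols hK hBK
    _ = K * L * (4 * η) := by ring

end CutNorm

section DecoratedIntegrand

variable {α : Type*} {v : ℕ} {G : SimpleGraph (Fin v)} [DecidableRel G.Adj]
  {R : Fin v × Fin v → α × α → ℝ} {h : α → ℝ} {e : Fin v × Fin v}

/-- The integrand of a homomorphism density in which every edge `p` carries its own kernel `R p`.
This is what the edge-by-edge replacement of one kernel by another runs through. -/
def decoratedIntegrand (G : SimpleGraph (Fin v)) [DecidableRel G.Adj]
    (R : Fin v × Fin v → α × α → ℝ) (h : α → ℝ) (x : Fin v → α) : ℝ :=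
  (∏ p ∈ edgePairs G, R p (x p.1, x p.2)) * ∏ a, h (x a)

theorem decoratedIntegrand_update_sub (he : e ∈ edgePairs G)
    (F F' : α × α → ℝ) (x : Fin v → α) :
    decoratedIntegrand G (Function.update R e F) h x
        - decoratedIntegrand G (Function.update R e F') h x
      = decoratedIntegrand G (Function.update R e (F - F')) h x := by
  have hsplit : ∀ F'' : α × α → ℝ, decoratedIntegrand G (Function.update R e F'') h x =
      F'' (x e.1, x e.2) * (∏ p ∈ (edgePairs G).erase e, R p (x p.1, x p.2)) * ∏ a, h (x a) := by
    intro F''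
    rw [decoratedIntegrand, ← Finset.mul_prod_erase _ _ he, Function.update_self]
    congr 2
    exact Finset.prod_congr rfl fun p hp => by
      rw [Function.update_of_ne (Finset.ne_of_mem_erase hp)]
  simp only [hsplit, Pi.sub_apply]
  ring

theorem abs_prod_edges_le_pow {K : ℝ} (hK : 1 ≤ K) (hRK : ∀ p ≠ e, ∀ z, |R p z| ≤ K)
    {s : Finset (Fin v × Fin v)} (hs : s ⊆ (edgePairs G).erase e) (x : Fin v → α) :
    |∏ p ∈ s, R p (x p.1, x p.2)| ≤ K ^ (edgePairs G).card :=
  calc |∏ p ∈ s, R p (x p.1, x p.2)| = ∏ p ∈ s, |R p (x p.1, x p.2)| := Finset.abs_prod _ _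
    _ ≤ ∏ _p ∈ s, K := Finset.prod_le_prod (fun _ _ => abs_nonneg _) fun p hp =>
        hRK p (Finset.ne_of_mem_erase (hs hp)) _
    _ = K ^ s.card := Finset.prod_const K
    _ ≤ K ^ (edgePairs G).card :=
        pow_le_pow_right₀ hK (Finset.card_le_card (hs.trans (Finset.erase_subset _ _)))

/-- The kernels `R`, cut off to `0` where `M > K` on every edge except `e`. -/
noncomputable def truncateExcept (e : Fin v × Fin v) (M : α × α → ℝ) (K : ℝ)
    (R : Fin v × Fin v → α × α → ℝ) (p : Fin v × Fin v) (z : α × α) : ℝ :=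
  open Classical in if p = e ∨ M z ≤ K then R p z else 0

variable {M : α × α → ℝ} {K : ℝ}

theorem truncateExcept_self : truncateExcept e M K R e = R e := by
  ext z
  simp [truncateExcept]

theorem abs_truncateExcept_le (p : Fin v × Fin v) (z : α × α) :
    |truncateExcept e M K R p z| ≤ |R p z| := by
  rw [truncateExcept]
  split_ifs <;> simp

theorem abs_truncateExcept_le_of_ne (hK : 0 ≤ K) (hRM : ∀ p z, |R p z| ≤ M z)
    {p : Fin v × Fin v} (hp : p ≠ e) (z : α × α) : |truncateExcept e M K R p z| ≤ K := by
  rw [truncateExcept]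
  split_ifs with h
  · exact (hRM p z).trans (h.resolve_left hp)
  · simpa using hK

end DecoratedIntegrand

section DecoratedDensities

variable {α : Type*} [MeasurableSpace α]

/-- A vertex weight: a measurable function with values in `[0,1]`. The coordinates of an element
of `Fc` are the vertex weights entering `G2`. -/
structure IsUnitWeight (h : α → ℝ) : Prop where
  measurable : Measurable h
  nonneg : ∀ x, 0 ≤ h x
  le_one : ∀ x, h x ≤ 1

variable {v : ℕ} {G : SimpleGraph (Fin v)} [DecidableRel G.Adj] {ρ : Measure α} {h : α → ℝ}

theorem IsUnitWeight.abs_prod_le_one (hh : IsUnitWeight h) (s : Finset (Fin v)) (x : Fin v → α) :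
    |∏ a ∈ s, h (x a)| ≤ 1 := by
  rw [abs_of_nonneg (Finset.prod_nonneg fun a _ => hh.nonneg _)]
  exact Finset.prod_le_one (fun a _ => hh.nonneg _) fun a _ => hh.le_one _

theorem IsUnitWeight.integrable [IsFiniteMeasure ρ] (hh : IsUnitWeight h) : Integrable h ρ :=
  .of_bound hh.measurable.aestronglyMeasurable 1 <| .of_forall fun x => by
    rw [Real.norm_of_nonneg (hh.nonneg x)]
    exact hh.le_one x

theorem IsUnitWeight.measurable_prod (hh : IsUnitWeight h) (s : Finset (Fin v)) :
    Measurable fun x : Fin v → α => ∏ a ∈ s, h (x a) :=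
  Finset.measurable_prod _ fun a _ => hh.measurable.comp (measurable_pi_apply a)

/-- The homomorphism density of `G` in the kernel `U`, with every vertex weighted by `h`: the
summands of `G2` are the densities `homDensity unif01 G W (f · r)`. -/
noncomputable def homDensity (ρ : Measure α) (G : SimpleGraph (Fin v)) [DecidableRel G.Adj]
    (U : α → α → ℝ) (h : α → ℝ) : ℝ :=
  ∫ x, edgeProd G (fun a b => U (x a) (x b)) * ∏ a, h (x a) ∂(Measure.pi fun _ : Fin v => ρ)

/-- The homomorphism densities of `G` in `U` and in `V` differ by at most `ε`, uniformly over the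
vertex weights. -/
def HomDensityClose (ρ : Measure α) (G : SimpleGraph (Fin v)) [DecidableRel G.Adj]
    (U V : α → α → ℝ) (ε : ℝ) : Prop :=
  ∀ h, IsUnitWeight h → |homDensity ρ G U h - homDensity ρ G V h| ≤ ε

variable {R : Fin v × Fin v → α × α → ℝ} {M : α × α → ℝ}

theorem homDensity_eq_integral_decoratedIntegrand (U : α → α → ℝ) :
    homDensity ρ G U h =
      ∫ x, decoratedIntegrand G (fun _ => Function.uncurry U) h x ∂(Measure.pi fun _ => ρ) := rfl

theorem measurable_prod_edges (hR : ∀ p, Measurable (R p)) (s : Finset (Fin v × Fin v)) :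
    Measurable fun x : Fin v → α => ∏ p ∈ s, R p (x p.1, x p.2) :=
  Finset.measurable_prod _ fun p _ => (hR p).comp (measurable_eval_pair p)

theorem measurable_decoratedIntegrand (hR : ∀ p, Measurable (R p)) (hh : IsUnitWeight h) :
    Measurable (decoratedIntegrand G R h) :=
  (measurable_prod_edges hR _).mul (hh.measurable_prod _)

theorem abs_decoratedIntegrand_le (hRM : ∀ p z, |R p z| ≤ M z) (hh : IsUnitWeight h)
    (x : Fin v → α) : |decoratedIntegrand G R h x| ≤ ∏ p ∈ edgePairs G, M (x p.1, x p.2) := by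
  rw [decoratedIntegrand, abs_mul, Finset.abs_prod]
  refine (mul_le_of_le_one_right (Finset.prod_nonneg fun p _ => abs_nonneg _)
    (hh.abs_prod_le_one _ x)).trans ?_
  exact Finset.prod_le_prod (fun p _ => abs_nonneg _) fun p _ => hRM p _

theorem integrable_decoratedIntegrand {q : ℝ} (hq : 1 ≤ q) (hM : ∀ z, 1 ≤ M z)
    (hMq : Integrable (fun x : Fin v → α => (∏ p ∈ edgePairs G, M (x p.1, x p.2)) ^ q)
      (Measure.pi fun _ => ρ))
    (hR : ∀ p, Measurable (R p)) (hRM : ∀ p z, |R p z| ≤ M z)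
    (hh : IsUnitWeight h) : Integrable (decoratedIntegrand G R h) (Measure.pi fun _ => ρ) :=
  hMq.mono' (measurable_decoratedIntegrand hR hh).aestronglyMeasurable <| .of_forall fun x =>
    (abs_decoratedIntegrand_le hRM hh x).trans <|
      Real.self_le_rpow_of_one_le (Finset.one_le_prod fun _ _ => hM _) hq

end DecoratedDensities

section CountingLemma

variable {α : Type*} [MeasurableSpace α] {ρ : Measure α} [IsProbabilityMeasure ρ]

-- Resampling the coordinates `a` and `b` leaves the integral unchanged and, with the other
-- coordinates frozen, exhibits it as `F` tested against a product of functions of one variable.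
theorem CutNormLE.abs_integral_pi_mul_mul_le {ι : Type*} [Fintype ι] [DecidableEq ι] {a b : ι}
    (hab : a ≠ b) {F : α × α → ℝ} {η : ℝ} (hcut : CutNormLE ρ F η) (hFm : Measurable F)
    (hF : Integrable F (ρ.prod ρ)) {P Q : (ι → α) → ℝ} (hP : Measurable P) (hQ : Measurable Q)
    {K L : ℝ} (hK : 0 ≤ K) (hL : 0 ≤ L) (hPK : ∀ x, |P x| ≤ K) (hQL : ∀ x, |Q x| ≤ L)
    (hPb : ∀ x t, P (Function.update x b t) = P x)
    (hQa : ∀ x t, Q (Function.update x a t) = Q x) :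
    |∫ x, F (x a, x b) * (P x * Q x) ∂(Measure.pi fun _ => ρ)| ≤ K * L * (4 * η) := by
  have hres := measurePreserving_update_update_prod (fun _ : ι => ρ) a b
  have hFab : Integrable (fun x : ι → α => F (x a, x b)) (Measure.pi fun _ => ρ) :=
    (measurePreserving_eval_pair (fun _ : ι => ρ) hab).integrable_comp_of_integrable hF
  have hint : Integrable (fun x => F (x a, x b) * (P x * Q x)) (Measure.pi fun _ => ρ) :=
    hFab.mul_bdd (c := K * L) (hP.mul hQ).aestronglyMeasurable <| .of_forall fun x => by
      rw [norm_mul]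
      exact mul_le_mul (hPK x) (hQL x) (norm_nonneg _) hK
  rw [← hres.map_eq] at hint ⊢
  have hint' := hint.comp_measurable hres.measurable
  rw [integral_map hres.measurable.aemeasurable hint.aestronglyMeasurable]
  simp only [Function.comp_def] at hint'
  rw [integral_prod _ hint', ← Real.norm_eq_abs]
  refine (norm_integral_le_of_norm_le_const (C := K * L * (4 * η)) (.of_forall fun y => ?_)).trans
    (by simp)
  rw [Real.norm_eq_abs]
  convert hcut.abs_integral_mul_mul_le hFm hF (B := fun t => P (Function.update y a t))
    (C := fun t => Q (Function.update y b t)) (hP.comp (measurable_update y))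
    (hQ.comp (measurable_update y)) hK hL (fun _ => hPK _) (fun _ => hQL _) using 4 with z
  simp only [Function.update_self, Function.update_of_ne hab, hPb]
  rw [Function.update_comm hab, hQa]

variable {v : ℕ} {G : SimpleGraph (Fin v)} [DecidableRel G.Adj] {h : α → ℝ}
  {R : Fin v × Fin v → α × α → ℝ} {e : Fin v × Fin v} {K η : ℝ}

theorem CutNormLE.abs_integral_decoratedIntegrand_le_of_bounded (hcut : CutNormLE ρ (R e) η)
    (he : e ∈ edgePairs G) (hR : ∀ p, Measurable (R p)) (hRe : Integrable (R e) (ρ.prod ρ))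
    (hK : 1 ≤ K) (hRK : ∀ p ≠ e, ∀ z, |R p z| ≤ K) (hh : IsUnitWeight h) :
    |∫ x, decoratedIntegrand G R h x ∂(Measure.pi fun _ => ρ)|
      ≤ K ^ (edgePairs G).card * K ^ (edgePairs G).card * (4 * η) := by
  have hlt : e.1 < e.2 := (mem_edgePairs.1 he).2
  set E := (edgePairs G).erase e
  let inc : Fin v × Fin v → Prop := fun p => p.1 = e.2 ∨ p.2 = e.2
  have hweight : ∀ s : Finset (Fin v × Fin v), s ⊆ E → ∀ (t : Finset (Fin v)) (x : Fin v → α),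
      |(∏ p ∈ s, R p (x p.1, x p.2)) * ∏ a ∈ t, h (x a)| ≤ K ^ (edgePairs G).card := by
    intro s hs t x
    rw [abs_mul]
    exact (mul_le_of_le_one_right (abs_nonneg _) (hh.abs_prod_le_one t x)).trans
      (abs_prod_edges_le_pow hK hRK hs x)
  convert hcut.abs_integral_pi_mul_mul_le hlt.ne (hR e) hRe
    (P := fun x => (∏ p ∈ E with ¬ inc p, R p (x p.1, x p.2)) *
      ∏ a ∈ Finset.univ.erase e.2, h (x a))
    (Q := fun x => (∏ p ∈ E with inc p, R p (x p.1, x p.2)) * ∏ a ∈ {e.2}, h (x a))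
    ((measurable_prod_edges hR _).mul (hh.measurable_prod _))
    ((measurable_prod_edges hR _).mul (hh.measurable_prod _)) (K := K ^ (edgePairs G).card)
    (L := K ^ (edgePairs G).card) (by positivity) (by positivity)
    (hweight _ (Finset.filter_subset _ _) _) (hweight _ (Finset.filter_subset _ _) _) ?_ ?_
    using 4 with x
  · rw [decoratedIntegrand, ← Finset.mul_prod_erase _ _ he,
      ← Finset.prod_filter_mul_prod_filter_not E inc,
      ← Finset.mul_prod_erase Finset.univ (fun a => h (x a)) (Finset.mem_univ e.2),
      Finset.prod_singleton]
    ring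
  · intro x t
    congr 1
    · refine Finset.prod_congr rfl fun p hp => ?_
      obtain ⟨h1, h2⟩ := not_or.1 (Finset.mem_filter.1 hp).2
      simp [Function.update_of_ne h1, Function.update_of_ne h2]
    · exact Finset.prod_congr rfl fun a ha => by
        rw [Function.update_of_ne (Finset.ne_of_mem_erase ha)]
  · intro x t
    congr 1
    · refine Finset.prod_congr rfl fun p hp => ?_
      obtain ⟨h1, h2⟩ : p.1 ≠ e.1 ∧ p.2 ≠ e.1 := by
        simp only [E, inc, Finset.mem_filter, Finset.mem_erase, mem_edgePairs, ne_eq,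
          Prod.ext_iff] at hp
        grind
      simp [Function.update_of_ne h1, Function.update_of_ne h2]
    · simp [Function.update_of_ne hlt.ne']

theorem abs_sub_le_card_mul_of_forall_insert {ι : Type*} [DecidableEq ι] {I : Finset ι → ℝ}
    {s : Finset ι} {δ : ℝ} (h : ∀ S, ∀ e ∈ s, e ∉ S → |I (insert e S) - I S| ≤ δ) :
    |I s - I ∅| ≤ s.card * δ := by
  induction s using Finset.induction with
  | empty => simp
  | insert e s hes ih =>
    rw [Finset.card_insert_of_notMem hes]
    push_cast
    linarith [ih fun S e' he' => h S e' (Finset.mem_insert_of_mem he'),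
      abs_sub_le (I (insert e s)) (I s) (I ∅), h s e (Finset.mem_insert_self _ _) hes]

theorem le_rpow_one_sub_mul_rpow {t q : ℝ} (hK : 0 < K) (hKt : K ≤ t) (hq : 1 ≤ q) :
    t ≤ K ^ (1 - q) * t ^ q :=
  calc t = t ^ (1 - q) * t ^ q := by rw [← Real.rpow_add (hK.trans_le hKt)]; simp
    _ ≤ K ^ (1 - q) * t ^ q := by
        have ht : 0 ≤ t := hK.le.trans hKt
        gcongr ?_ * _
        exact Real.rpow_le_rpow_of_nonpos hK hKt (by linarith)

variable {M : α × α → ℝ}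

theorem measurable_truncateExcept (hM : Measurable M) (hR : ∀ p, Measurable (R p))
    (p : Fin v × Fin v) : Measurable (truncateExcept e M K R p) := by
  classical
  exact Measurable.ite ((MeasurableSet.const _).union (measurableSet_le hM measurable_const))
    (hR p) measurable_const

theorem abs_decoratedIntegrand_sub_truncateExcept_le (hK : 1 ≤ K) (hM : ∀ z, 1 ≤ M z)
    (hRM : ∀ p z, |R p z| ≤ M z) (hh : IsUnitWeight h) {q : ℝ} (hq : 1 ≤ q) (x : Fin v → α) :
    |decoratedIntegrand G R h x - decoratedIntegrand G (truncateExcept e M K R) h x|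
      ≤ K ^ (1 - q) * (∏ p ∈ edgePairs G, M (x p.1, x p.2)) ^ q := by
  have hprod : ∀ s : Finset (Fin v × Fin v), 1 ≤ ∏ p ∈ s, M (x p.1, x p.2) := fun s =>
    Finset.one_le_prod fun _ _ => hM _
  by_cases hx : ∀ p ∈ edgePairs G, p = e ∨ M (x p.1, x p.2) ≤ K
  · have heq : decoratedIntegrand G (truncateExcept e M K R) h x = decoratedIntegrand G R h x := by
      rw [decoratedIntegrand, decoratedIntegrand]
      congr 1
      exact Finset.prod_congr rfl fun p hp => if_pos (hx p hp)
    rw [heq, sub_self, abs_zero]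
    have := hprod (edgePairs G)
    positivity
  · push Not at hx
    obtain ⟨p, hp, hpe, hpK⟩ := hx
    have hzero : decoratedIntegrand G (truncateExcept e M K R) h x = 0 := by
      rw [decoratedIntegrand, Finset.prod_eq_zero hp (if_neg (by simp [hpe, hpK])), zero_mul]
    have hKN : K ≤ ∏ p ∈ edgePairs G, M (x p.1, x p.2) := by
      rw [← Finset.mul_prod_erase _ _ hp]
      exact hpK.le.trans (le_mul_of_one_le_right (by linarith [hM (x p.1, x p.2)]) (hprod _))
    rw [hzero, sub_zero]
    exact (abs_decoratedIntegrand_le hRM hh x).trans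
      (le_rpow_one_sub_mul_rpow (by linarith) hKN hq)

section Dominated

variable {q : ℝ} (hq : 1 ≤ q) (hM : ∀ z, 1 ≤ M z)
  (hMq : Integrable (fun x : Fin v → α => (∏ p ∈ edgePairs G, M (x p.1, x p.2)) ^ q)
    (Measure.pi fun _ => ρ))

include hq hM hMq

theorem CutNormLE.abs_integral_decoratedIntegrand_le (hMm : Measurable M)
    (hcut : CutNormLE ρ (R e) η) (he : e ∈ edgePairs G) (hR : ∀ p, Measurable (R p))
    (hRe : Integrable (R e) (ρ.prod ρ)) (hRM : ∀ p z, |R p z| ≤ M z) (hK : 1 ≤ K)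
    (hh : IsUnitWeight h) :
    |∫ x, decoratedIntegrand G R h x ∂(Measure.pi fun _ => ρ)|
      ≤ K ^ (edgePairs G).card * K ^ (edgePairs G).card * (4 * η) +
        K ^ (1 - q) * ∫ x, (∏ p ∈ edgePairs G, M (x p.1, x p.2)) ^ q ∂(Measure.pi fun _ => ρ) := by
  set T := truncateExcept e M K R
  have hT : ∀ p, Measurable (T p) := measurable_truncateExcept hMm hR
  have hTe : T e = R e := truncateExcept_self
  have hint := integrable_decoratedIntegrand hq hM hMq hR hRM hh
  have hintT := integrable_decoratedIntegrand hq hM hMq hT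
    (fun p z => (abs_truncateExcept_le p z).trans (hRM p z)) hh
  have hbounded : |∫ x, decoratedIntegrand G T h x ∂(Measure.pi fun _ => ρ)|
      ≤ K ^ (edgePairs G).card * K ^ (edgePairs G).card * (4 * η) :=
    CutNormLE.abs_integral_decoratedIntegrand_le_of_bounded (hTe ▸ hcut) he hT (hTe ▸ hRe) hK
      (fun _ hp => abs_truncateExcept_le_of_ne (by linarith) hRM hp) hh
  have htail : |∫ x, (decoratedIntegrand G R h x - decoratedIntegrand G T h x)
      ∂(Measure.pi fun _ => ρ)| ≤ K ^ (1 - q) *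
        ∫ x, (∏ p ∈ edgePairs G, M (x p.1, x p.2)) ^ q ∂(Measure.pi fun _ => ρ) := by
    rw [← integral_const_mul]
    exact norm_integral_le_of_norm_le
      (f := fun x => decoratedIntegrand G R h x - decoratedIntegrand G T h x) (hMq.const_mul _)
      (.of_forall (abs_decoratedIntegrand_sub_truncateExcept_le hK hM hRM hh hq))
  rw [integral_sub hint hintT] at htail
  linarith [abs_sub_abs_le_abs_sub (∫ x, decoratedIntegrand G R h x ∂(Measure.pi fun _ => ρ))
    (∫ x, decoratedIntegrand G T h x ∂(Measure.pi fun _ => ρ))]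

theorem CutNormLE.abs_integral_decoratedIntegrand_update_sub_le {F F' : α × α → ℝ}
    (hMm : Measurable M) (hcut : CutNormLE ρ (F - F') η) (he : e ∈ edgePairs G)
    (hR : ∀ p, Measurable (R p)) (hF : Measurable F) (hF' : Measurable F')
    (hFF' : Integrable (F - F') (ρ.prod ρ)) (hRM : ∀ p z, |R p z| ≤ M z)
    (hFM : ∀ z, |F z| + |F' z| ≤ M z) (hK : 1 ≤ K) (hh : IsUnitWeight h) :
    |∫ x, decoratedIntegrand G (Function.update R e F) h x ∂(Measure.pi fun _ => ρ)
        - ∫ x, decoratedIntegrand G (Function.update R e F') h x ∂(Measure.pi fun _ => ρ)|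
      ≤ K ^ (edgePairs G).card * K ^ (edgePairs G).card * (4 * η) +
        K ^ (1 - q) * ∫ x, (∏ p ∈ edgePairs G, M (x p.1, x p.2)) ^ q ∂(Measure.pi fun _ => ρ) := by
  have hmeas : ∀ F, Measurable F → ∀ p, Measurable (Function.update R e F p) := fun F hF p => by
    rcases eq_or_ne p e with rfl | hp <;> simp [*]
  have hdom : ∀ F, (∀ z, |F z| ≤ M z) → ∀ p z, |Function.update R e F p z| ≤ M z := fun F hF p => by
    rcases eq_or_ne p e with rfl | hp <;> simp [*]
  have hint := fun F hF hFM =>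
    integrable_decoratedIntegrand hq hM hMq (hmeas F hF) (hdom F hFM) hh
  rw [← integral_sub (hint F hF fun z => by linarith [hFM z, abs_nonneg (F' z)])
    (hint F' hF' fun z => by linarith [hFM z, abs_nonneg (F z)])]
  simp_rw [decoratedIntegrand_update_sub he]
  exact CutNormLE.abs_integral_decoratedIntegrand_le hq hM hMq hMm (by simpa using hcut) he
    (hmeas _ (hF.sub hF')) (by simpa using hFF')
    (hdom _ fun z => (abs_sub (F z) (F' z)).trans (hFM z)) hK hh

-- Replace `V` by `U` one edge at a time.
theorem CutNormLE.abs_homDensity_sub_le {U V : α → α → ℝ} (hMm : Measurable M)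
    (hcut : CutNormLE ρ (Function.uncurry U - Function.uncurry V) η)
    (hU : Measurable (Function.uncurry U)) (hV : Measurable (Function.uncurry V))
    (hUV : Integrable (Function.uncurry U - Function.uncurry V) (ρ.prod ρ))
    (hUVM : ∀ z, |Function.uncurry U z| + |Function.uncurry V z| ≤ M z) (hK : 1 ≤ K)
    (hh : IsUnitWeight h) :
    |homDensity ρ G U h - homDensity ρ G V h| ≤ (edgePairs G).card *
      (K ^ (edgePairs G).card * K ^ (edgePairs G).card * (4 * η) +
        K ^ (1 - q) * ∫ x, (∏ p ∈ edgePairs G, M (x p.1, x p.2)) ^ q ∂(Measure.pi fun _ => ρ)) := by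
  let hybrid : Finset (Fin v × Fin v) → Fin v × Fin v → α × α → ℝ := fun S =>
    S.piecewise (fun _ => Function.uncurry U) fun _ => Function.uncurry V
  have hybrid_cases : ∀ S p,
      hybrid S p = Function.uncurry U ∨ hybrid S p = Function.uncurry V := fun S p =>
    (em (p ∈ S)).imp (Finset.piecewise_eq_of_mem _ _ _) (Finset.piecewise_eq_of_notMem _ _ _)
  have hmeas : ∀ S p, Measurable (hybrid S p) := fun S p => by
    rcases hybrid_cases S p with h | h <;> rwa [h]
  have hdom : ∀ S p z, |hybrid S p z| ≤ M z := fun S p z => by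
    rcases hybrid_cases S p with h | h <;> rw [h] <;>
      linarith [hUVM z, abs_nonneg (Function.uncurry U z), abs_nonneg (Function.uncurry V z)]
  have hU_eq : homDensity ρ G U h =
      ∫ x, decoratedIntegrand G (hybrid (edgePairs G)) h x ∂(Measure.pi fun _ => ρ) :=
    integral_congr_ae <| .of_forall fun x => by
      simp only [edgeProd, decoratedIntegrand]
      congr 1
      exact Finset.prod_congr rfl fun p hp => by
        simp [hybrid, show p ∈ edgePairs G from hp, Function.uncurry]
  have hV_eq : homDensity ρ G V h =
      ∫ x, decoratedIntegrand G (hybrid ∅) h x ∂(Measure.pi fun _ => ρ) := by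
    simp [hybrid, homDensity_eq_integral_decoratedIntegrand]
  rw [hU_eq, hV_eq]
  refine abs_sub_le_card_mul_of_forall_insert
    (I := fun S => ∫ x, decoratedIntegrand G (hybrid S) h x ∂(Measure.pi fun _ => ρ))
    fun S e he heS => ?_
  have hV_e : hybrid S = Function.update (hybrid S) e (Function.uncurry V) := by
    simp [hybrid, heS]
  have hU_e : hybrid (insert e S) = Function.update (hybrid S) e (Function.uncurry U) :=
    Finset.piecewise_insert _ _ _ _
  rw [hU_e]
  nth_rw 2 [hV_e]
  exact CutNormLE.abs_integral_decoratedIntegrand_update_sub_le hq hM hMq hMm hcut he (hmeas S)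
    hU hV hUV (hdom S) hUVM hK hh

end Dominated

theorem eLpNorm_one_add_abs_add_abs_le {X : Type*} [MeasurableSpace X] {π : Measure X}
    [IsProbabilityMeasure π] {f g : X → ℝ} (hf : AEStronglyMeasurable f π)
    (hg : AEStronglyMeasurable g π) {r C : ℝ≥0∞} (hr : 1 ≤ r) (hfC : eLpNorm f r π ≤ C)
    (hgC : eLpNorm g r π ≤ C) : eLpNorm (fun x => 1 + |f x| + |g x|) r π ≤ 1 + C + C := by
  have hone : eLpNorm (fun _ : X => (1 : ℝ)) r π = 1 := by
    rw [eLpNorm_const _ (by positivity) (NeZero.ne π)]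
    simp
  rw [← eLpNorm_norm] at hfC hgC
  calc eLpNorm (fun x => 1 + |f x| + |g x|) r π
      ≤ eLpNorm (fun x => 1 + |f x|) r π + eLpNorm (fun x => ‖g x‖) r π :=
        eLpNorm_add_le (aestronglyMeasurable_const.add hf.norm) hg.norm hr
    _ ≤ eLpNorm (fun _ => (1 : ℝ)) r π + eLpNorm (fun x => ‖f x‖) r π
          + eLpNorm (fun x => ‖g x‖) r π := by
        gcongr
        exact eLpNorm_add_le aestronglyMeasurable_const hf.norm hr
    _ ≤ 1 + C + C := by rw [hone]; gcongr

variable {D : ℕ} {q : ℝ} {C : ℝ≥0}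

theorem memLp_prod_edgePairs (hD : 0 < D) (hG : G.maxDegree ≤ D) (hq : 0 < q) {M : α × α → ℝ}
    (hM : Measurable M) (hMC : eLpNorm M (ENNReal.ofReal q * D) (ρ.prod ρ) ≤ C) :
    MemLp (fun x => ∏ p ∈ edgePairs G, M (x p.1, x p.2)) (ENNReal.ofReal q)
        (Measure.pi fun _ => ρ) ∧
      eLpNorm (fun x => ∏ p ∈ edgePairs G, M (x p.1, x p.2)) (ENNReal.ofReal q)
        (Measure.pi fun _ => ρ) ≤ (C ^ (edgePairs G).card : ℝ≥0) := by
  have hle : eLpNorm (fun x => ∏ p ∈ edgePairs G, M (x p.1, x p.2)) (ENNReal.ofReal q)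
      (Measure.pi fun _ => ρ) ≤ (C ^ (edgePairs G).card : ℝ≥0) :=
    (eLpNorm_prod_edgePairs_le hD hG hq fun _ => hM).trans <| by
      rw [Finset.prod_const]
      push_cast
      gcongr
  exact ⟨⟨(measurable_prod_edges (fun _ => hM) _).aestronglyMeasurable,
    hle.trans_lt ENNReal.coe_lt_top⟩, hle⟩

theorem integral_rpow_le_of_eLpNorm_le {X : Type*} [MeasurableSpace X] {π : Measure X} {f : X → ℝ}
    (hq : 0 < q) (hf0 : ∀ x, 0 ≤ f x) (hf : MemLp f (ENNReal.ofReal q) π)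
    (hfC : eLpNorm f (ENNReal.ofReal q) π ≤ C) :
    Integrable (fun x => f x ^ q) π ∧ ∫ x, f x ^ q ∂π ≤ C ^ q := by
  have hq0 : ENNReal.ofReal q ≠ 0 := by simpa using hq
  have hint := hf.integrable_norm_rpow hq0 ENNReal.ofReal_ne_top
  rw [hf.eLpNorm_eq_integral_rpow_norm hq0 ENNReal.ofReal_ne_top, ENNReal.ofReal_le_coe] at hfC
  simp only [ENNReal.toReal_ofReal hq.le, Real.norm_of_nonneg (hf0 _)] at hint hfC
  refine ⟨hint, ?_⟩
  rwa [Real.rpow_inv_le_iff_of_pos (integral_nonneg fun x => Real.rpow_nonneg (hf0 x) q)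
    C.coe_nonneg hq] at hfC

theorem one_le_ofReal_mul_natCast (hD : 0 < D) (hq : 1 ≤ q) : 1 ≤ ENNReal.ofReal q * D :=
  one_le_mul (ENNReal.one_le_ofReal.2 hq) (by exact_mod_cast hD)

theorem exists_one_le_mul_rpow_one_sub_le (hq : 1 < q) (A : ℝ) {ε : ℝ} (hε : 0 < ε) :
    ∃ K : ℝ, 1 ≤ K ∧ A * K ^ (1 - q) ≤ ε := by
  have hlim : Tendsto (fun K : ℝ => A * K ^ (1 - q)) atTop (nhds 0) := by
    simpa using (tendsto_rpow_neg_atTop (y := q - 1) (by linarith)).const_mul A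
  exact ((eventually_ge_atTop 1).and (hlim.eventually_le_const hε)).exists

/-- The counting lemma. -/
theorem exists_cutNormLE_imp_homDensityClose (hD : 0 < D) (hG : G.maxDegree ≤ D) (hq : 1 < q)
    (C : ℝ≥0) {ε : ℝ} (hε : 0 < ε) :
    ∃ η > 0, ∀ U V : α → α → ℝ, Measurable (Function.uncurry U) → Measurable (Function.uncurry V) →
      eLpNorm (Function.uncurry U) (ENNReal.ofReal q * D) (ρ.prod ρ) ≤ C →
      eLpNorm (Function.uncurry V) (ENNReal.ofReal q * D) (ρ.prod ρ) ≤ C →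
      CutNormLE ρ (Function.uncurry U - Function.uncurry V) η → HomDensityClose ρ G U V ε := by
  set n := (edgePairs G).card
  set A : ℝ := ((1 + C + C) ^ n : ℝ≥0) ^ q
  obtain ⟨K, hK1, hKA⟩ := exists_one_le_mul_rpow_one_sub_le hq (n * A) (half_pos hε)
  set B : ℝ := n * (K ^ n * K ^ n * 4)
  have hB : 0 ≤ B := by positivity
  refine ⟨ε / 2 / (B + 1), by positivity, fun U V hU hV hUC hVC hcut h hh => ?_⟩
  have hr := one_le_ofReal_mul_natCast hD hq.le
  let M : α × α → ℝ := fun z => 1 + |Function.uncurry U z| + |Function.uncurry V z|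
  have hM : Measurable M := (measurable_const.add hU.abs).add hV.abs
  have hM1 : ∀ z, 1 ≤ M z := fun z => by
    linarith [abs_nonneg (Function.uncurry U z), abs_nonneg (Function.uncurry V z)]
  have hMC : eLpNorm M (ENNReal.ofReal q * D) (ρ.prod ρ) ≤ (1 + C + C : ℝ≥0) := by
    push_cast
    exact eLpNorm_one_add_abs_add_abs_le hU.aestronglyMeasurable hV.aestronglyMeasurable hr hUC hVC
  obtain ⟨hmem, hle⟩ := memLp_prod_edgePairs (G := G) hD hG (by linarith) hM hMC
  obtain ⟨hMq, hMA⟩ := integral_rpow_le_of_eLpNorm_le (by linarith)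
    (fun x => Finset.prod_nonneg fun p _ => zero_le_one.trans (hM1 _)) hmem hle
  have hint : ∀ U : α → α → ℝ, Measurable (Function.uncurry U) →
      eLpNorm (Function.uncurry U) (ENNReal.ofReal q * D) (ρ.prod ρ) ≤ C →
      Integrable (Function.uncurry U) (ρ.prod ρ) := fun U hU hUC =>
    MemLp.integrable hr ⟨hU.aestronglyMeasurable, hUC.trans_lt ENNReal.coe_lt_top⟩
  calc |homDensity ρ G U h - homDensity ρ G V h|
      ≤ n * (K ^ n * K ^ n * (4 * (ε / 2 / (B + 1))) + K ^ (1 - q) *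
          ∫ x, (∏ p ∈ edgePairs G, M (x p.1, x p.2)) ^ q ∂(Measure.pi fun _ => ρ)) :=
        CutNormLE.abs_homDensity_sub_le hq.le hM1 hMq hM hcut hU hV
          ((hint U hU hUC).sub (hint V hV hVC)) (fun z => by linarith) hK1 hh
    _ ≤ n * (K ^ n * K ^ n * (4 * (ε / 2 / (B + 1))) + K ^ (1 - q) * A) := by gcongr
    _ = B / (B + 1) * (ε / 2) + n * A * K ^ (1 - q) := by ring
    _ ≤ 1 * (ε / 2) + ε / 2 := by
        gcongr
        exact (div_le_one (by positivity)).2 (by linarith)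
    _ = ε := by ring

end CountingLemma

section CellAverage

variable {Ω β : Type*} [mΩ : MeasurableSpace Ω] {π : Measure Ω} [IsFiniteMeasure π]
  [mβ : MeasurableSpace β] [MeasurableSingletonClass β] [Finite β] {κ : Ω → β}

/-- The mean of `F` over the cell labelled `b` of the finite partition `κ`; it is `0` when that cell
is a null set. -/
noncomputable def cellAverage (π : Measure Ω) (κ : Ω → β) (F : Ω → ℝ) (b : β) : ℝ :=
  ⨍ x in κ ⁻¹' {b}, F x ∂π

theorem integrable_comp_of_finite (g : β → ℝ) (hκ : Measurable κ) :
    Integrable (fun x => g (κ x)) π :=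
  (Integrable.of_finite (μ := π.map κ) (f := g)).comp_measurable hκ

theorem setIntegral_cellAverage (hκ : Measurable κ) {F : Ω → ℝ} (hF : Integrable F π)
    (t : Set β) : ∫ x in κ ⁻¹' t, cellAverage π κ F (κ x) ∂π = ∫ x in κ ⁻¹' t, F x ∂π := by
  have hcell : ∀ b, MeasurableSet (κ ⁻¹' {b}) := fun b => hκ (measurableSet_singleton b)
  have hdisj : Pairwise (Function.onFun Disjoint fun b : t => κ ⁻¹' {b.1}) := fun b b' hbb' =>
    (disjoint_singleton.2 (Subtype.coe_ne_coe.2 hbb')).preimage κ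
  rw [← biUnion_preimage_singleton, biUnion_eq_iUnion,
    integral_iUnion (fun b : t => hcell b) hdisj
      (integrable_comp_of_finite (cellAverage π κ F) hκ).integrableOn,
    integral_iUnion (fun b : t => hcell b) hdisj hF.integrableOn]
  refine tsum_congr fun b => ?_
  rw [← setIntegral_setAverage π F]
  exact setIntegral_congr_fun (hcell b) fun x hx => by
    rw [cellAverage, show κ x = b from hx]

theorem cellAverage_ae_eq_condExp (hκ : Measurable κ) {F : Ω → ℝ} (hF : Integrable F π) :
    (fun x => cellAverage π κ F (κ x)) =ᵐ[π] π[F | mβ.comap κ] := by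
  refine ae_eq_condExp_of_forall_setIntegral_eq hκ.comap_le hF
    (fun _ _ _ => (integrable_comp_of_finite _ hκ).integrableOn) ?_ ?_
  · rintro _ ⟨t, -, rfl⟩ -
    exact setIntegral_cellAverage hκ hF t
  · exact ((measurable_of_countable (cellAverage π κ F)).comp
      (comap_measurable κ)).aestronglyMeasurable

theorem eLpNorm_cellAverage_le (hκ : Measurable κ) {F : Ω → ℝ} (hF : Integrable F π)
    {p : ℝ≥0∞} (hp : 1 ≤ p) :
    eLpNorm (fun x => cellAverage π κ F (κ x)) p π ≤ eLpNorm F p π := by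
  rw [eLpNorm_congr_ae (cellAverage_ae_eq_condExp hκ hF)]
  exact eLpNorm_condExp_le_eLpNorm F hp

end CellAverage

section BlockAverage

variable {α β : Type*} [MeasurableSpace α] {ρ : Measure α}
  [MeasurableSpace β] {κ : α → β}

/-- The kernel constant on the products of cells of `κ`, equal there to the mean of `F`. -/
noncomputable def blockAverage (ρ : Measure α) (κ : α → β) (F : α × α → ℝ) : α × α → ℝ :=
  fun z => cellAverage (ρ.prod ρ) (Prod.map κ κ) F (κ z.1, κ z.2)

variable [MeasurableSingletonClass β]

theorem tendsto_blockAverage (hκ : Measurable κ) {U : ℕ → α × α → ℝ} {F : α × α → ℝ}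
    (hU : ∀ n, Integrable (U n) (ρ.prod ρ)) (hF : Integrable F (ρ.prod ρ))
    {η : ℕ → ℝ} (hη : Tendsto η atTop (nhds 0)) (hcut : ∀ n, CutNormLE ρ (U n - F) (η n))
    (z : α × α) :
    Tendsto (fun n => blockAverage ρ κ (U n) z) atTop (nhds (blockAverage ρ κ F z)) := by
  have hcell : ∀ b, MeasurableSet (κ ⁻¹' {b}) := fun b => hκ (measurableSet_singleton b)
  have hprod : Prod.map κ κ ⁻¹' {(κ z.1, κ z.2)} = (κ ⁻¹' {κ z.1}) ×ˢ (κ ⁻¹' {κ z.2}) := by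
    rw [← singleton_prod_singleton, preimage_prod_map_prod]
  simp only [blockAverage, cellAverage, hprod, setAverage_eq]
  refine Tendsto.const_smul (tendsto_iff_norm_sub_tendsto_zero.2 ?_) _
  refine squeeze_zero (fun _ => norm_nonneg _) (fun n => ?_) hη
  rw [← integral_sub (hU n).integrableOn hF.integrableOn]
  exact hcut n _ _ (hcell _) (hcell _)

variable [Finite β]

theorem measurable_blockAverage (hκ : Measurable κ) {F : α × α → ℝ} :
    Measurable (blockAverage ρ κ F) :=
  (measurable_of_countable _).comp (hκ.prodMap hκ)

variable [IsFiniteMeasure ρ]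

theorem integrable_blockAverage (hκ : Measurable κ) {F : α × α → ℝ} :
    Integrable (blockAverage ρ κ F) (ρ.prod ρ) :=
  integrable_comp_of_finite (cellAverage (ρ.prod ρ) (Prod.map κ κ) F) (hκ.prodMap hκ)

theorem blockAverage_ae_eq_condExp (hκ : Measurable κ) {F : α × α → ℝ}
    (hF : Integrable F (ρ.prod ρ)) :
    blockAverage ρ κ F =ᵐ[ρ.prod ρ]
      (ρ.prod ρ)[F | Prod.instMeasurableSpace.comap (Prod.map κ κ)] :=
  cellAverage_ae_eq_condExp (hκ.prodMap hκ) hF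

theorem eLpNorm_blockAverage_le (hκ : Measurable κ) {F : α × α → ℝ}
    (hF : Integrable F (ρ.prod ρ)) {p : ℝ≥0∞} (hp : 1 ≤ p) :
    eLpNorm (blockAverage ρ κ F) p (ρ.prod ρ) ≤ eLpNorm F p (ρ.prod ρ) :=
  eLpNorm_cellAverage_le (hκ.prodMap hκ) hF hp

end BlockAverage

section ProductCells

variable {α : Type*} [MeasurableSpace α] [MeasurableSpace.CountablyGenerated α]

/-- The label of `x` in the `n`-th of a refining sequence of finite partitions generating the
σ-algebra: membership in the first `n` sets of a countable generating family. -/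
def generatingCode (n : ℕ) (x : α) : Fin n → Prop :=
  fun i => x ∈ MeasurableSpace.natGeneratingSequence α i

theorem measurable_generatingCode (n : ℕ) : Measurable (generatingCode (α := α) n) :=
  measurable_pi_lambda _ fun _ =>
    measurable_mem.2 (MeasurableSpace.measurableSet_natGeneratingSequence _)

theorem comap_generatingCode_mono :
    Monotone fun n => MeasurableSpace.pi.comap (generatingCode (α := α) n) := fun m n hmn => by
  have hrestrict : generatingCode (α := α) m =
      (fun (y : Fin n → Prop) i => y (i.castLE hmn)) ∘ generatingCode n := rfl
  simp only [hrestrict, ← MeasurableSpace.comap_comp]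
  exact MeasurableSpace.comap_mono (Measurable.comap_le (by fun_prop))

theorem iSup_comap_generatingCode :
    ⨆ n, MeasurableSpace.pi.comap (generatingCode (α := α) n) = ‹MeasurableSpace α› := by
  refine le_antisymm (iSup_le fun n => (measurable_generatingCode n).comap_le) ?_
  conv_lhs => rw [← MeasurableSpace.generateFrom_natGeneratingSequence α]
  refine MeasurableSpace.generateFrom_le ?_
  rintro _ ⟨k, rfl⟩
  exact le_iSup (fun n => MeasurableSpace.pi.comap (generatingCode (α := α) n)) (k + 1) _
    ⟨{y | y (Fin.last k)}, measurableSet_setOfPred.2 (measurable_pi_apply _), rfl⟩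

/-- The filtration on `α × α` whose `n`-th σ-algebra is generated by the products of cells of
`generatingCode n`. -/
noncomputable def productFiltration (α : Type*) [MeasurableSpace α]
    [MeasurableSpace.CountablyGenerated α] :
    Filtration ℕ (Prod.instMeasurableSpace : MeasurableSpace (α × α)) where
  seq n := Prod.instMeasurableSpace.comap (Prod.map (generatingCode n) (generatingCode n))
  mono' m n hmn := by
    simp only [Prod.instMeasurableSpace, MeasurableSpace.comap_prodMap]
    exact sup_le_sup (MeasurableSpace.comap_mono (comap_generatingCode_mono hmn))
      (MeasurableSpace.comap_mono (comap_generatingCode_mono hmn))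
  le' n := ((measurable_generatingCode n).prodMap (measurable_generatingCode n)).comap_le

theorem iSup_productFiltration :
    ⨆ n, productFiltration α n = Prod.instMeasurableSpace := by
  change ⨆ n, MeasurableSpace.comap _ _ = _
  simp only [Prod.instMeasurableSpace, MeasurableSpace.comap_prodMap]
  simp only [MeasurableSpace.prod, iSup_sup_eq, ← MeasurableSpace.comap_iSup,
    iSup_comap_generatingCode]

variable {ρ : Measure α} [IsFiniteMeasure ρ]

theorem eLpNorm_le_of_forall_eLpNorm_blockAverage_le {F : α × α → ℝ} (hFm : Measurable F)
    (hF : Integrable F (ρ.prod ρ)) {p C : ℝ≥0∞}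
    (hC : ∀ n, eLpNorm (blockAverage ρ (generatingCode n) F) p (ρ.prod ρ) ≤ C) :
    eLpNorm F p (ρ.prod ρ) ≤ C := by
  have hlim : ∀ᵐ z ∂(ρ.prod ρ),
      Tendsto (fun n => blockAverage ρ (generatingCode n) F z) atTop (nhds (F z)) := by
    filter_upwards [hF.tendsto_ae_condExp (ℱ := productFiltration α)
      (by rw [iSup_productFiltration]; exact hFm.stronglyMeasurable),
      ae_all_iff.2 fun n => blockAverage_ae_eq_condExp (measurable_generatingCode n) hF]
      with z hz hcond
    exact hz.congr fun n => (hcond n).symm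
  refine (Lp.eLpNorm_lim_le_liminf_eLpNorm
    (fun n => (measurable_blockAverage (measurable_generatingCode n)).aestronglyMeasurable)
    F hlim).trans ?_
  exact liminf_le_of_le (by isBoundedDefault) fun b hb =>
    let ⟨n, hn⟩ := hb.exists
    hn.trans (hC n)

theorem tendsto_eLpNorm_blockAverage_sub {F : α × α → ℝ} (hFm : Measurable F)
    (hF : Integrable F (ρ.prod ρ)) :
    Tendsto (fun n => eLpNorm (blockAverage ρ (generatingCode n) F - F) 1 (ρ.prod ρ)) atTop
      (nhds 0) := by
  refine (hF.tendsto_eLpNorm_condExp (ℱ := productFiltration α)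
    (by rw [iSup_productFiltration]; exact hFm.stronglyMeasurable)).congr fun n => ?_
  exact eLpNorm_congr_ae <|
    ((blockAverage_ae_eq_condExp (measurable_generatingCode n) hF).sub .rfl).symm

/-- The integrals over each product cell converge, hence so do the `L^p` norms of block averages. -/
theorem eLpNorm_le_of_tendsto_cutNormLE {U : ℕ → α × α → ℝ} {F : α × α → ℝ}
    (hU : ∀ n, Integrable (U n) (ρ.prod ρ)) (hFm : Measurable F) (hF : Integrable F (ρ.prod ρ))
    {η : ℕ → ℝ} (hη : Tendsto η atTop (nhds 0)) (hcut : ∀ n, CutNormLE ρ (U n - F) (η n))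
    {p C : ℝ≥0∞} (hp : 1 ≤ p) (hUC : ∀ᶠ n in atTop, eLpNorm (U n) p (ρ.prod ρ) ≤ C) :
    eLpNorm F p (ρ.prod ρ) ≤ C := by
  refine eLpNorm_le_of_forall_eLpNorm_blockAverage_le hFm hF fun k => ?_
  have hκ := measurable_generatingCode (α := α) k
  have hlim : ∀ z, Tendsto (fun n => blockAverage ρ (generatingCode k) (U n) z) atTop
      (nhds (blockAverage ρ (generatingCode k) F z)) := fun z =>
    tendsto_blockAverage hκ hU hF hη hcut z
  refine (Lp.eLpNorm_lim_le_liminf_eLpNorm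
    (fun n => (measurable_blockAverage hκ).aestronglyMeasurable) _ (.of_forall hlim)).trans ?_
  refine liminf_le_of_le (by isBoundedDefault) fun b hb => ?_
  obtain ⟨n, hn, hnC⟩ := (hb.and hUC).exists
  exact hn.trans ((eLpNorm_blockAverage_le hκ (hU n) hp).trans hnC)

theorem exists_cutNormLE_sub_blockAverage {F : α × α → ℝ} (hFm : Measurable F)
    (hF : Integrable F (ρ.prod ρ)) {δ : ℝ} (hδ : 0 < δ) :
    ∃ n, CutNormLE ρ (F - blockAverage ρ (generatingCode n) F) δ := by
  obtain ⟨n, hn⟩ := ((tendsto_eLpNorm_blockAverage_sub hFm hF).eventually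
    (eventually_le_nhds (ENNReal.ofReal_pos.2 hδ))).exists
  refine ⟨n, fun S T _ _ => ?_⟩
  have hint : Integrable (F - blockAverage ρ (generatingCode n) F) (ρ.prod ρ) :=
    hF.sub (integrable_blockAverage (measurable_generatingCode n))
  calc |∫ z in S ×ˢ T, (F - blockAverage ρ (generatingCode n) F) z ∂(ρ.prod ρ)|
      ≤ ∫ z in S ×ˢ T, ‖(F - blockAverage ρ (generatingCode n) F) z‖ ∂(ρ.prod ρ) :=
        norm_integral_le_integral_norm (F - blockAverage ρ (generatingCode n) F)
    _ ≤ ∫ z, ‖(F - blockAverage ρ (generatingCode n) F) z‖ ∂(ρ.prod ρ) :=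
        setIntegral_le_integral hint.norm (.of_forall fun _ => norm_nonneg _)
    _ ≤ δ := by
        rw [integral_norm_eq_lintegral_enorm hint.aestronglyMeasurable,
          ← eLpNorm_one_eq_lintegral_enorm, eLpNorm_sub_comm]
        exact ENNReal.toReal_le_of_le_ofReal hδ.le hn

end ProductCells

section Equipartition

/-- `ι` splits the measure space into `n` labelled measurable cells, each of mass `1 / n`. -/
structure IsEquipartition {α : Type*} [MeasurableSpace α] (ρ : Measure α) {n : ℕ}
    (ι : α → Fin n) : Prop where
  measurable : Measurable ι
  measureReal_preimage : ∀ i, ρ.real (ι ⁻¹' {i}) = (n : ℝ)⁻¹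

theorem IsEquipartition.comp_measurePreserving {α γ : Type*} [MeasurableSpace α]
    [MeasurableSpace γ] {ρ : Measure α} {ρ' : Measure γ} {n : ℕ} {ι : α → Fin n}
    (hι : IsEquipartition ρ ι) {σ : γ → α} (hσ : MeasurePreserving σ ρ' ρ) :
    IsEquipartition ρ' (ι ∘ σ) where
  measurable := hι.measurable.comp hσ.measurable
  measureReal_preimage i := by
    rw [preimage_comp, hσ.measureReal_preimage
      (hι.measurable (measurableSet_singleton i)).nullMeasurableSet, hι.measureReal_preimage]

/-- The label of the cell `(i/n, (i+1)/n]` containing `x`; the truncations give points outside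
`(0, 1]` an arbitrary label. -/
noncomputable def intervalIndex (n : ℕ) [NeZero n] (x : ℝ) : Fin n :=
  ⟨min (⌈n * x⌉₊ - 1) (n - 1), by have := NeZero.pos n; omega⟩

variable {n : ℕ} [NeZero n]

theorem measurable_intervalIndex : Measurable (intervalIndex n) :=
  (measurable_from_nat (f := fun k => (⟨min (k - 1) (n - 1), by
    have := NeZero.pos n; omega⟩ : Fin n))).comp
      (Nat.measurable_ceil.comp (measurable_const_mul (n : ℝ)))

theorem intervalIndex_eq_iff {x : ℝ} (hx : x ∈ Ioc (0 : ℝ) 1) (i : Fin n) :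
    intervalIndex n x = i ↔ x ∈ Ioc ((i : ℝ) / n) (((i : ℝ) + 1) / n) := by
  have hn : (0 : ℝ) < n := by exact_mod_cast NeZero.pos n
  have hceil_pos : 0 < ⌈n * x⌉₊ := Nat.ceil_pos.2 (mul_pos hn hx.1)
  have hceil_le : ⌈n * x⌉₊ ≤ n := Nat.ceil_le.2 (mul_le_of_le_one_right hn.le hx.2)
  have hceil : intervalIndex n x = i ↔ ⌈n * x⌉₊ = (i : ℕ) + 1 := by
    rw [Fin.ext_iff]
    simp only [intervalIndex]
    have := i.2
    omega
  rw [hceil, Nat.ceil_eq_iff (by omega), mem_Ioc, div_lt_iff₀ hn, le_div_iff₀ hn]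
  push_cast
  rw [mul_comm x]

theorem ae_mem_Ioc_unif01 : ∀ᵐ x ∂unif01, x ∈ Ioc (0 : ℝ) 1 := by
  rw [unif01, ← restrict_Ioc_eq_restrict_Icc]
  exact ae_restrict_mem measurableSet_Ioc

theorem isEquipartition_intervalIndex : IsEquipartition unif01 (intervalIndex n) where
  measurable := measurable_intervalIndex
  measureReal_preimage i := by
    have hn : (0 : ℝ) < n := by exact_mod_cast NeZero.pos n
    have hfiber : intervalIndex n ⁻¹' {i} =ᵐ[unif01] Ioc ((i : ℝ) / n) (((i : ℝ) + 1) / n) := by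
      filter_upwards [ae_mem_Ioc_unif01] with x hx
      exact propext (intervalIndex_eq_iff hx i)
    have hsub : Ioc ((i : ℝ) / n) (((i : ℝ) + 1) / n) ⊆ Icc 0 1 := fun x hx =>
      ⟨(by positivity : (0 : ℝ) ≤ i / n).trans hx.1.le, hx.2.trans <| by
        rw [div_le_one hn]
        exact_mod_cast i.2⟩
    rw [measureReal_congr hfiber, unif01, measureReal_restrict_apply measurableSet_Ioc,
      inter_eq_left.2 hsub, Real.volume_real_Ioc_of_le (by gcongr; simp)]
    field_simp
    ring

theorem stepKernel_eq_intervalIndex (Q : Fin n → Fin n → ℝ) {x y : ℝ} (hx : x ∈ Ioc (0 : ℝ) 1)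
    (hy : y ∈ Ioc (0 : ℝ) 1) :
    stepKernel n Q x y = Q (intervalIndex n x) (intervalIndex n y) := by
  simp_rw [stepKernel, ← intervalIndex_eq_iff hx, ← intervalIndex_eq_iff hy, ite_and]
  simp

end Equipartition

section WeakCutDistance

theorem setIntegral_unif01_prod {F : ℝ × ℝ → ℝ} (hF : Integrable F (unif01.prod unif01))
    {S T : Set ℝ} (hS : MeasurableSet S) (hT : MeasurableSet T) :
    ∫ z in S ×ˢ T, F z ∂(unif01.prod unif01) =
      ∫ x in Icc (0 : ℝ) 1 ∩ S, ∫ y in Icc (0 : ℝ) 1 ∩ T, F (x, y) := by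
  rw [setIntegral_prod _ hF.integrableOn, unif01, Measure.restrict_restrict hS,
    Measure.restrict_restrict hT, inter_comm S, inter_comm T]

theorem cutNormLE_cutDist {U W : ℝ → ℝ → ℝ}
    (hUW : Integrable (Function.uncurry U - Function.uncurry W) (unif01.prod unif01)) :
    CutNormLE unif01 (Function.uncurry U - Function.uncurry W) (cutDist U W) := by
  have hbound : ∀ S T : Set ℝ, MeasurableSet S → MeasurableSet T →
      |∫ x in Icc (0 : ℝ) 1 ∩ S, ∫ y in Icc (0 : ℝ) 1 ∩ T, (U x y - W x y)| ≤
        ∫ z, |(Function.uncurry U - Function.uncurry W) z| ∂(unif01.prod unif01) := by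
    intro S T hS hT
    refine (congrArg _ (setIntegral_unif01_prod hUW hS hT)).ge.trans ?_
    exact abs_integral_le_integral_abs.trans
      (setIntegral_le_integral hUW.abs (.of_forall fun _ => abs_nonneg _))
  have : Nonempty {S : Set ℝ // MeasurableSet S} := ⟨⟨∅, .empty⟩⟩
  intro S T hS hT
  rw [setIntegral_unif01_prod hUW hS hT]
  have hT_bdd : BddAbove (range fun T : {T : Set ℝ // MeasurableSet T} =>
      |∫ x in Icc (0 : ℝ) 1 ∩ S, ∫ y in Icc (0 : ℝ) 1 ∩ T.1, (U x y - W x y)|) :=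
    ⟨_, forall_mem_range.2 fun T => hbound S T.1 hS T.2⟩
  have hS_bdd : BddAbove (range fun S : {S : Set ℝ // MeasurableSet S} =>
      ⨆ T : {T : Set ℝ // MeasurableSet T},
        |∫ x in Icc (0 : ℝ) 1 ∩ S.1, ∫ y in Icc (0 : ℝ) 1 ∩ T.1, (U x y - W x y)|) :=
    ⟨_, forall_mem_range.2 fun S => ciSup_le fun T => hbound S.1 T.1 S.2 T.2⟩
  exact (le_ciSup hT_bdd ⟨T, hT⟩).trans (le_ciSup hS_bdd ⟨S, hS⟩)

/-- The kernel `(x, y) ↦ Q (ι x) (ι y)`. -/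
def pullbackKernel {α β : Type*} (ι : α → β) (Q : β → β → ℝ) : α → α → ℝ :=
  fun x y => Q (ι x) (ι y)

section Finite

variable {α β : Type*} [MeasurableSpace α] [MeasurableSpace β] [MeasurableSingletonClass β]
  [Finite β] {ι : α → β}

theorem measurable_pullbackKernel (hι : Measurable ι) (Q : β → β → ℝ) :
    Measurable (Function.uncurry (pullbackKernel ι Q)) :=
  (measurable_of_countable (Function.uncurry Q)).comp (hι.prodMap hι)

theorem integrable_pullbackKernel {ρ : Measure α} [IsFiniteMeasure ρ] (hι : Measurable ι)
    (Q : β → β → ℝ) : Integrable (Function.uncurry (pullbackKernel ι Q)) (ρ.prod ρ) :=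
  integrable_comp_of_finite (Function.uncurry Q) (hι.prodMap hι)

end Finite

theorem stepKernel_comp_ae_eq {n : ℕ} [NeZero n] (Q : Fin n → Fin n → ℝ) {σ : ℝ → ℝ}
    (hσ : MeasurePreserving σ unif01 unif01) :
    Function.uncurry (fun x y => stepKernel n Q (σ x) (σ y)) =ᵐ[unif01.prod unif01]
      Function.uncurry (pullbackKernel (intervalIndex n ∘ σ) Q) := by
  have hmem := hσ.quasiMeasurePreserving.ae ae_mem_Ioc_unif01
  filter_upwards [Measure.quasiMeasurePreserving_fst.ae hmem,
    Measure.quasiMeasurePreserving_snd.ae hmem] with z hx hy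
  exact stepKernel_eq_intervalIndex Q hx hy

theorem exists_isEquipartition_cutNormLE (n : ℕ) [NeZero n] (Q : Fin n → Fin n → ℝ)
    {W : ℝ → ℝ → ℝ} (hW : Integrable (Function.uncurry W) (unif01.prod unif01)) {ε : ℝ}
    (hε : 0 < ε) :
    ∃ ι : ℝ → Fin n, IsEquipartition unif01 ι ∧
      (∀ p, kerNorm (pullbackKernel ι Q) p = kerNorm (stepKernel n Q) p) ∧
      CutNormLE unif01 (Function.uncurry (pullbackKernel ι Q) - Function.uncurry W)
        (weakCutDist (stepKernel n Q) W + ε) := by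
  have : Nonempty {σ : ℝ → ℝ // MPB σ} := ⟨⟨id, bijOn_id _, .id _⟩⟩
  obtain ⟨⟨σ, _, hσ⟩, hσW⟩ := exists_lt_of_ciInf_lt
    (lt_add_of_pos_right (weakCutDist (stepKernel n Q) W) hε)
  have hι := (isEquipartition_intervalIndex (n := n)).comp_measurePreserving hσ
  have hae := stepKernel_comp_ae_eq Q hσ
  refine ⟨_, hι, fun p => ?_, fun S T hS hT => ?_⟩
  · refine (eLpNorm_comp_measurePreserving
      (measurable_pullbackKernel measurable_intervalIndex Q).aestronglyMeasurable
      (hσ.prod hσ)).trans ?_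
    exact eLpNorm_congr_ae (stepKernel_comp_ae_eq Q (.id unif01)).symm
  · refine le_trans (le_of_eq ?_) ((cutNormLE_cutDist ?_ S T hS hT).trans hσW.le)
    · exact congrArg _ (integral_congr_ae (ae_restrict_of_ae (hae.symm.sub .rfl)))
    · exact ((integrable_pullbackKernel hι.measurable Q).sub hW).congr (hae.symm.sub .rfl)

end WeakCutDistance

section BlockFormula

variable {α β : Type*} [MeasurableSpace α] [MeasurableSpace β] [MeasurableSingletonClass β]
  [Fintype β] {v : ℕ} {ρ : Measure α} [SigmaFinite ρ] {κ : α → β}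

theorem integral_comp_mul_prod_eq_sum (hκ : Measurable κ) (Φ : (Fin v → β) → ℝ) {h : α → ℝ}
    (hh : Integrable h ρ) :
    ∫ x, Φ (fun a => κ (x a)) * ∏ a, h (x a) ∂(Measure.pi fun _ => ρ) =
      ∑ i, Φ i * ∏ a, ∫ u in κ ⁻¹' {i a}, h u ∂ρ := by
  classical
  have hcell : ∀ b, MeasurableSet (κ ⁻¹' {b}) := fun b => hκ (measurableSet_singleton b)
  have hexpand : ∀ x : Fin v → α, Φ (fun a => κ (x a)) * ∏ a, h (x a) =
      ∑ i, Φ i * ∏ a, (κ ⁻¹' {i a}).indicator h (x a) := fun x => by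
    rw [Finset.sum_eq_single fun a => κ (x a)]
    · simp
    · intro i _ hi
      obtain ⟨a, ha⟩ := Function.ne_iff.1 hi
      have hzero : (κ ⁻¹' {i a}).indicator h (x a) = 0 :=
        indicator_of_notMem (fun hmem => ha hmem.symm) _
      rw [Finset.prod_eq_zero (Finset.mem_univ a) hzero, mul_zero]
    · simp
  simp_rw [hexpand]
  rw [integral_finsetSum _ fun i _ =>
    (Integrable.fintype_prod fun a => hh.indicator (hcell (i a))).const_mul (Φ i)]
  simp_rw [integral_const_mul, integral_fintype_prod_eq_prod, integral_indicator (hcell _)]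

end BlockFormula

section BlockPolynomial

variable {α β R : Type*} [Fintype β] [Fintype R] {v : ℕ} {G : SimpleGraph (Fin v)}
  [DecidableRel G.Adj]

/-- The functional `G₂` of the colouring density `f` for the kernel `U`, over an arbitrary measure
space and set of colours. -/
noncomputable def colorDensity [MeasurableSpace α] (ρ : Measure α) (G : SimpleGraph (Fin v))
    [DecidableRel G.Adj] (U : α → α → ℝ) (f : α → R → ℝ) : ℝ :=
  ∑ r, homDensity ρ G U fun x => f x r

/-- The mass of colour `r` in the cell `b` of the partition `κ`. -/
noncomputable def cellMass [MeasurableSpace α] (ρ : Measure α) (κ : α → β) (f : α → R → ℝ) (b : β)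
    (r : R) : ℝ :=
  ∫ u in κ ⁻¹' {b}, f u r ∂ρ

/-- The colour density of the block kernel `w`, as a polynomial in the cell masses `m`. -/
def blockPolynomial (G : SimpleGraph (Fin v)) [DecidableRel G.Adj] (w : β → β → ℝ)
    (m : β → R → ℝ) : ℝ :=
  ∑ i : Fin v → β, edgeProd G (fun a b => w (i a) (i b)) * ∑ r, ∏ a, m (i a) r

/-- The configuration `x`, viewed as the field of point masses at its colours. -/
def pointMasses [DecidableEq R] (x : β → R) (i : β) : R → ℝ :=
  Pi.single (x i) 1

/-- The part of `blockPolynomial` coming from distinct cells; at `n⁻¹ • pointMasses x` it is the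
`U`-statistic of the configuration `x`, of which it is the multilinear extension. -/
def injectiveBlockPolynomial [DecidableEq β] (G : SimpleGraph (Fin v)) [DecidableRel G.Adj]
    (w : β → β → ℝ) (m : β → R → ℝ) : ℝ :=
  ∑ i : Fin v → β with Function.Injective i,
    edgeProd G (fun a b => w (i a) (i b)) * ∑ r, ∏ a, m (i a) r

/-- The normalised contribution of the non-injective index tuples. -/
noncomputable def noninjectiveWeight {n : ℕ} (G : SimpleGraph (Fin v)) [DecidableRel G.Adj]
    (Q : Fin n → Fin n → ℝ) : ℝ :=
  (∑ i : Fin v → Fin n with ¬ Function.Injective i, |edgeProd G fun a b => Q (i a) (i b)|) *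
    ((n : ℝ)⁻¹) ^ v

theorem colorDensity_pullbackKernel [MeasurableSpace α] [MeasurableSpace β]
    [MeasurableSingletonClass β] {ρ : Measure α} [SigmaFinite ρ] {κ : α → β} (hκ : Measurable κ)
    (w : β → β → ℝ) {f : α → R → ℝ} (hf : ∀ r, Integrable (fun u => f u r) ρ) :
    colorDensity ρ G (pullbackKernel κ w) f = blockPolynomial G w (cellMass ρ κ f) := by
  simp_rw [blockPolynomial, Finset.mul_sum]
  rw [Finset.sum_comm]
  exact Finset.sum_congr rfl fun r _ =>
    integral_comp_mul_prod_eq_sum hκ (fun i => edgeProd G fun a b => w (i a) (i b)) (hf r)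

theorem abs_injectiveBlockPolynomial_sub_blockPolynomial_le {n : ℕ} (Q : Fin n → Fin n → ℝ)
    {m : Fin n → R → ℝ} (hm : ∀ i r, 0 ≤ m i r) (hmn : ∀ i r, m i r ≤ (n : ℝ)⁻¹) :
    |injectiveBlockPolynomial G Q m - blockPolynomial G Q m| ≤
      Fintype.card R * noninjectiveWeight G Q := by
  rw [blockPolynomial, injectiveBlockPolynomial, noninjectiveWeight,
    ← Finset.sum_filter_add_sum_filter_not Finset.univ
      (fun i : Fin v → Fin n => Function.Injective i), sub_add_cancel_left, abs_neg,
    Finset.sum_mul, Finset.mul_sum]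
  refine (Finset.abs_sum_le_sum_abs _ _).trans (Finset.sum_le_sum fun i _ => ?_)
  have hprod : ∀ r, 0 ≤ ∏ a, m (i a) r := fun r => Finset.prod_nonneg fun a _ => hm _ _
  have hsum : ∑ r, ∏ a, m (i a) r ≤ Fintype.card R * (n : ℝ)⁻¹ ^ v :=
    calc ∑ r, ∏ a, m (i a) r ≤ ∑ _r : R, (n : ℝ)⁻¹ ^ v := by
          gcongr with r
          exact (Finset.prod_le_prod (fun a _ => hm _ _) fun a _ => hmn _ _).trans (by simp)
      _ = Fintype.card R * (n : ℝ)⁻¹ ^ v := by simp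
  rw [abs_mul, abs_of_nonneg (Finset.sum_nonneg fun r _ => hprod r)]
  calc |edgeProd G fun a b => Q (i a) (i b)| * ∑ r, ∏ a, m (i a) r
      ≤ |edgeProd G fun a b => Q (i a) (i b)| * (Fintype.card R * (n : ℝ)⁻¹ ^ v) := by gcongr
    _ = Fintype.card R * (|edgeProd G fun a b => Q (i a) (i b)| * (n : ℝ)⁻¹ ^ v) := by ring

theorem Ustat_monoPhi_eq {c n : ℕ} (hv : 0 < v) (Q : Fin n → Fin n → ℝ) (x : Fin n → Fin c) :
    Ustat G (monoPhi c v) n Q x =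
      injectiveBlockPolynomial G Q ((n : ℝ)⁻¹ • pointMasses x) := by
  have hmono : ∀ i : Fin v → Fin n, ∑ r, ∏ a, ((n : ℝ)⁻¹ • pointMasses x) (i a) r =
      monoPhi c v (x ∘ i) * (n : ℝ)⁻¹ ^ v := fun i => by
    simp only [Pi.smul_apply, pointMasses, Pi.single_apply, smul_eq_mul, mul_ite, mul_one, mul_zero,
      Finset.prod_ite_zero, Finset.mem_univ, true_imp_iff, Finset.prod_const,
      Finset.card_univ, Fintype.card_fin, monoPhi, Function.comp, ite_mul, one_mul, zero_mul]
    split_ifs with hx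
    · rw [Finset.sum_eq_single (x (i ⟨0, hv⟩)) (fun r _ hr => if_neg fun h => hr (h _))
        (by simp), if_pos fun a => hx _ a]
    · exact Finset.sum_eq_zero fun r _ => if_neg fun h => hx fun a b => (h a).symm.trans (h b)
  simp only [Ustat, injectiveBlockPolynomial, hmono, Finset.sum_div]
  exact Finset.sum_congr (by ext; simp) fun i _ => by
    rw [div_eq_mul_inv, inv_pow]
    ring

end BlockPolynomial

section NoninjectiveTuples

variable {α : Type*} [MeasurableSpace α] {ρ : Measure α} [IsProbabilityMeasure ρ] {v : ℕ}
  {G : SimpleGraph (Fin v)} [DecidableRel G.Adj] {D : ℕ} {q : ℝ}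

theorem tendsto_card_not_injective_mul_inv_pow (v : ℕ) : Tendsto (fun n : ℕ =>
    ((Finset.univ.filter fun i : Fin v → Fin n => ¬ Function.Injective i).card : ℝ) *
      (n : ℝ)⁻¹ ^ v) atTop (nhds 0) := by
  have hone : Tendsto (fun n : ℕ => 1 - (n.descFactorial v : ℝ) / (n : ℝ) ^ v) atTop
      (nhds (1 - 1)) := by
    refine tendsto_const_nhds.sub
      ((Asymptotics.isEquivalent_iff_tendsto_one ?_).1 (isEquivalent_descFactorial v))
    filter_upwards [eventually_gt_atTop 0] with n hn
    positivity
  rw [sub_self] at hone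
  refine hone.congr' ?_
  filter_upwards [eventually_gt_atTop 0] with n hn
  have hinj : (Finset.univ.filter fun i : Fin v → Fin n => Function.Injective i).card =
      n.descFactorial v := by
    rw [← Fintype.card_subtype, Fintype.card_congr (Equiv.subtypeInjectiveEquivEmbedding _ _),
      Fintype.card_embedding_eq, Fintype.card_fin, Fintype.card_fin]
  have hcard : (n.descFactorial v : ℝ) +
      (Finset.univ.filter fun i : Fin v → Fin n => ¬ Function.Injective i).card = (n : ℝ) ^ v := by
    rw [← hinj]
    exact_mod_cast (Finset.card_filter_add_card_filter_not _).trans (by simp)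
  rw [inv_pow, ← div_eq_mul_inv, eq_div_iff (by positivity), sub_mul,
    div_mul_cancel₀ _ (by positivity), one_mul, ← hcard, add_sub_cancel_left]

theorem sum_abs_edgeProd_rpow_le {C : ℝ≥0} (hD : 0 < D) (hG : G.maxDegree ≤ D) (hq : 0 < q)
    {n : ℕ} {ι : α → Fin n} (hι : IsEquipartition ρ ι) {Q : Fin n → Fin n → ℝ}
    (hQC : eLpNorm (Function.uncurry (pullbackKernel ι Q)) (ENNReal.ofReal q * D) (ρ.prod ρ) ≤ C) :
    (∑ i : Fin v → Fin n, |edgeProd G fun a b => Q (i a) (i b)| ^ q) * (n : ℝ)⁻¹ ^ v ≤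
      ((C ^ (edgePairs G).card : ℝ≥0) : ℝ) ^ q := by
  rw [← eLpNorm_norm] at hQC
  obtain ⟨hmem, hle⟩ :=
    memLp_prod_edgePairs hD hG hq (measurable_pullbackKernel hι.measurable Q).norm hQC
  have hformula := integral_comp_mul_prod_eq_sum (ρ := ρ) hι.measurable
    (fun i : Fin v → Fin n => |edgeProd G fun a b => Q (i a) (i b)| ^ q) (integrable_const (1 : ℝ))
  simp only [setIntegral_const, hι.measureReal_preimage, smul_eq_mul, mul_one,
    Finset.prod_const, one_pow, Finset.card_univ, Fintype.card_fin, ← Finset.sum_mul] at hformula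
  rw [← hformula]
  refine le_of_eq_of_le ?_ (integral_rpow_le_of_eLpNorm_le hq
    (fun x => Finset.prod_nonneg fun p _ => norm_nonneg _) hmem hle).2
  simp only [edgeProd, edgePairs, Finset.abs_prod, Real.norm_eq_abs, Function.uncurry_apply_pair,
    pullbackKernel]

theorem eventually_noninjectiveWeight_le (hD : 0 < D) (hG : G.maxDegree ≤ D) (hq : 1 < q)
    (C : ℝ≥0) {ε : ℝ} (hε : 0 < ε) : ∀ᶠ n : ℕ in atTop, ∀ (ι : α → Fin n) (Q : Fin n → Fin n → ℝ),
      IsEquipartition ρ ι →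
      eLpNorm (Function.uncurry (pullbackKernel ι Q)) (ENNReal.ofReal q * D) (ρ.prod ρ) ≤ C →
      noninjectiveWeight G Q ≤ ε := by
  set A : ℝ := ((C ^ (edgePairs G).card : ℝ≥0) : ℝ) ^ q
  obtain ⟨K, hK, hKA⟩ := exists_one_le_mul_rpow_one_sub_le hq A (half_pos hε)
  have hcard := (tendsto_card_not_injective_mul_inv_pow v).const_mul K
  rw [mul_zero] at hcard
  filter_upwards [hcard.eventually_le_const (half_pos hε)] with n hn ι Q hι hQC
  have hsplit : ∀ t : ℝ, 0 ≤ t → t ≤ K + K ^ (1 - q) * t ^ q := fun t ht => by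
    rcases le_total t K with h | h
    · exact h.trans (le_add_of_nonneg_right (by positivity))
    · linarith [le_rpow_one_sub_mul_rpow (by linarith) h hq.le]
  set s := Finset.univ.filter fun i : Fin v → Fin n => ¬ Function.Injective i
  let e : (Fin v → Fin n) → ℝ := fun i => |edgeProd G fun a b => Q (i a) (i b)|
  calc noninjectiveWeight G Q ≤ (∑ i ∈ s, (K + K ^ (1 - q) * e i ^ q)) * (n : ℝ)⁻¹ ^ v := by
        unfold noninjectiveWeight
        gcongr with i
        exact hsplit _ (abs_nonneg _)
    _ = K * (s.card * (n : ℝ)⁻¹ ^ v) + (∑ i ∈ s, e i ^ q) * (n : ℝ)⁻¹ ^ v * K ^ (1 - q) := by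
        rw [Finset.sum_add_distrib, Finset.sum_const, nsmul_eq_mul, ← Finset.mul_sum]
        ring
    _ ≤ K * (s.card * (n : ℝ)⁻¹ ^ v) + (∑ i, e i ^ q) * (n : ℝ)⁻¹ ^ v * K ^ (1 - q) := by
        gcongr
        exact Finset.subset_univ s
    _ ≤ ε / 2 + A * K ^ (1 - q) := by
        gcongr
        exact sum_abs_edgeProd_rpow_le hD hG (by linarith) hι hQC
    _ ≤ ε := by linarith

theorem abs_injectiveBlockPolynomial_cellMass_sub_colorDensity_le {R : Type*} [Fintype R] {n : ℕ}
    {ι : α → Fin n} (hι : IsEquipartition ρ ι) (Q : Fin n → Fin n → ℝ) {f : α → R → ℝ}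
    (hf : ∀ r, IsUnitWeight fun u => f u r) :
    |injectiveBlockPolynomial G Q (cellMass ρ ι f) - colorDensity ρ G (pullbackKernel ι Q) f| ≤
      Fintype.card R * noninjectiveWeight G Q := by
  have hint : ∀ r, Integrable (fun u => f u r) ρ := fun r => (hf r).integrable
  rw [colorDensity_pullbackKernel hι.measurable Q hint]
  refine abs_injectiveBlockPolynomial_sub_blockPolynomial_le Q
    (fun i r => integral_nonneg (hf r).nonneg) fun i r => ?_
  calc ∫ u in ι ⁻¹' {i}, f u r ∂ρ ≤ ∫ _ in ι ⁻¹' {i}, (1 : ℝ) ∂ρ :=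
        setIntegral_mono (hint r).integrableOn (integrable_const _) (hf r).le_one
    _ = (n : ℝ)⁻¹ := by simp [hι.measureReal_preimage]

end NoninjectiveTuples

section FiniteEntropy

variable {X R : Type*} [Fintype R]

theorem sum_mul_sub_sum_mul_log_le_log_sum {s : Finset X} {P ν : X → ℝ} (hP : ∀ x ∈ s, 0 < P x)
    (hν : ∀ x ∈ s, 0 ≤ ν x) (hνs : ∑ x ∈ s, ν x = 1) (F : X → ℝ) :
    ∑ x ∈ s, ν x * F x - ∑ x ∈ s, ν x * Real.log (ν x / P x) ≤
      Real.log (∑ x ∈ s, P x * Real.exp (F x)) := by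
  have hs : s.Nonempty := Finset.nonempty_of_sum_ne_zero (hνs.trans_ne one_ne_zero)
  set Z := ∑ x ∈ s, P x * Real.exp (F x) with hZ
  have hZpos : 0 < Z := Finset.sum_pos (fun x hx => mul_pos (hP x hx) (Real.exp_pos _)) hs
  have hterm : ∀ x ∈ s, ν x * F x - ν x * Real.log (ν x / P x) - ν x * Real.log Z ≤
      P x * Real.exp (F x) / Z - ν x := fun x hx => by
    have hPx := hP x hx
    rcases (hν x hx).eq_or_lt with hzero | hpos
    · simp only [← hzero, zero_mul, sub_zero]
      positivity
    · have hlog : F x - Real.log (ν x / P x) - Real.log Z =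
          Real.log (P x * Real.exp (F x) / Z / ν x) := by
        rw [Real.log_div hpos.ne' hPx.ne', Real.log_div (by positivity) hpos.ne',
          Real.log_div (by positivity) hZpos.ne', Real.log_mul hPx.ne' (Real.exp_ne_zero _),
          Real.log_exp]
        ring
      calc ν x * F x - ν x * Real.log (ν x / P x) - ν x * Real.log Z
          = ν x * Real.log (P x * Real.exp (F x) / Z / ν x) := by rw [← hlog]; ring
        _ ≤ ν x * (P x * Real.exp (F x) / Z / ν x - 1) := by
          gcongr
          exact Real.log_le_sub_one_of_pos (by positivity)
        _ = P x * Real.exp (F x) / Z - ν x := by field_simp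
  have hsum := Finset.sum_le_sum hterm
  rw [Finset.sum_sub_distrib, Finset.sum_sub_distrib, Finset.sum_sub_distrib, ← Finset.sum_mul,
    hνs, ← Finset.sum_div, ← hZ, div_self hZpos.ne'] at hsum
  linarith

/-- The relative entropy (Kullback–Leibler divergence) of the weights `g` with respect to `m`. -/
noncomputable def relEntropy (g m : R → ℝ) : ℝ :=
  ∑ r, g r * Real.log (g r / m r)

theorem relEntropy_nonneg {g m : R → ℝ} (hm : ∀ r, 0 < m r) (hm1 : ∑ r, m r = 1)
    (hg : g ∈ stdSimplex ℝ R) : 0 ≤ relEntropy g m := by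
  simpa [relEntropy, hm1] using
    sum_mul_sub_sum_mul_log_le_log_sum (fun r _ => hm r) (fun r _ => hg.1 r) hg.2 0

end FiniteEntropy

section ProductWeights

variable {I R : Type*} [Fintype I] [DecidableEq I] [Fintype R]

theorem sum_prod_mul_prod_comp_injective {V : Type*} [Fintype V] {g : I → R → ℝ}
    (hg : ∀ j, ∑ r, g j r = 1) {i : V → I} (hi : Function.Injective i) (φ : V → R → ℝ) :
    ∑ x : I → R, (∏ j, g j (x j)) * ∏ a, φ a (x (i a)) = ∏ a, ∑ r, g (i a) r * φ a r := by
  have hextend : ∀ x : I → R,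
      ∏ a, φ a (x (i a)) = ∏ j, Function.extend i φ 1 j (x j) := fun x =>
    Fintype.prod_of_injective i hi _ _
      (fun j hj => by rw [Function.extend_apply' _ _ _ fun ⟨a, ha⟩ => hj ⟨a, ha⟩]; rfl)
      fun a => by rw [hi.extend_apply]
  simp_rw [hextend, ← Finset.prod_mul_distrib]
  rw [← Fintype.prod_sum fun j r => g j r * Function.extend i φ 1 j r]
  refine (Fintype.prod_of_injective i hi _ _ (fun j hj => ?_) fun a => ?_).symm
  · rw [Function.extend_apply' _ _ _ fun ⟨a, ha⟩ => hj ⟨a, ha⟩]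
    simpa using hg j
  · rw [hi.extend_apply]

theorem sum_prod_eq_one {g : I → R → ℝ} (hg : ∀ j, ∑ r, g j r = 1) :
    ∑ x : I → R, ∏ j, g j (x j) = 1 := by
  rw [← Fintype.prod_sum, Finset.prod_eq_one fun j _ => hg j]

theorem relEntropy_prod {g m : I → R → ℝ} (hm : ∀ j r, m j r ≠ 0) (hg : ∀ j, ∑ r, g j r = 1) :
    relEntropy (fun x : I → R => ∏ j, g j (x j)) (fun x => ∏ j, m j (x j)) =
      ∑ j, relEntropy (g j) (m j) := by
  have hlog : ∀ x : I → R, (∏ j, g j (x j)) * Real.log ((∏ j, g j (x j)) / ∏ j, m j (x j)) =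
      ∑ i, (∏ j, g j (x j)) * Real.log (g i (x i) / m i (x i)) := fun x => by
    rw [← Finset.mul_sum]
    by_cases hzero : ∏ j, g j (x j) = 0
    · rw [hzero, zero_mul, zero_mul]
    · rw [← Finset.prod_div_distrib, Real.log_prod fun j hj =>
        div_ne_zero (Finset.prod_ne_zero_iff.1 hzero j hj) (hm j _)]
  simp_rw [relEntropy, hlog]
  rw [Finset.sum_comm]
  refine Finset.sum_congr rfl fun i _ => ?_
  simpa using sum_prod_mul_prod_comp_injective hg
    (Function.injective_of_subsingleton fun _ : Unit => i) fun _ r => Real.log (g i r / m i r)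

end ProductWeights

section Configurations

variable {I R : Type*} [DecidableEq R]

/-- The one-site marginals of the weights `P` conditioned on the set `A` of configurations. -/
noncomputable def condMarginal (P : (I → R) → ℝ) (A : Finset (I → R)) : I → R → ℝ :=
  A.centerMass P pointMasses

theorem condMarginal_pos {P : (I → R) → ℝ} {A : Finset (I → R)} (hP : ∀ x ∈ A, 0 < P x)
    {x : I → R} (hx : x ∈ A) (i : I) : 0 < condMarginal P A i (x i) := by
  simp only [condMarginal, Finset.centerMass, pointMasses, Pi.smul_apply, Finset.sum_apply,
    smul_eq_mul]
  refine mul_pos (inv_pos.2 (Finset.sum_pos hP ⟨x, hx⟩)) (Finset.sum_pos' (fun y hy => ?_)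
    ⟨x, hx, ?_⟩)
  · exact mul_nonneg (hP y hy).le ((Pi.single_nonneg (α := fun _ : R => ℝ)).2 zero_le_one _)
  · simpa using hP x hx

theorem condMarginal_comp_mem_of_convex {α : Type*} {κ : α → I} {P : (I → R) → ℝ}
    {A : Finset (I → R)} (hP : ∀ x ∈ A, 0 ≤ P x) (hA : 0 < ∑ x ∈ A, P x)
    {K : Set (α → R → ℝ)} (hK : Convex ℝ K)
    (hAK : ∀ x ∈ A, (fun u => pointMasses x (κ u)) ∈ K) :
    (fun u => condMarginal P A (κ u)) ∈ K := by
  have hcenter : (fun u => condMarginal P A (κ u)) =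
      A.centerMass P fun x u => pointMasses x (κ u) := by
    ext u r
    simp [condMarginal, Finset.centerMass]
  exact hcenter ▸ hK.centerMass_mem hP hA hAK

variable [Fintype R]

theorem pointMasses_mem_stdSimplex (x : I → R) (i : I) : pointMasses x i ∈ stdSimplex ℝ R :=
  single_mem_stdSimplex ℝ (x i)

theorem sum_condMarginal_mul (P : (I → R) → ℝ) (A : Finset (I → R)) (i : I) (L : R → ℝ) :
    ∑ r, condMarginal P A i r * L r = ∑ x ∈ A, P x / (∑ y ∈ A, P y) * L (x i) := by
  simp only [condMarginal, Finset.centerMass, pointMasses, Pi.smul_apply, Finset.sum_apply,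
    smul_eq_mul, Pi.single_apply, Finset.mul_sum, Finset.sum_mul]
  rw [Finset.sum_comm]
  refine Finset.sum_congr rfl fun x _ => ?_
  simp [div_eq_inv_mul, mul_assoc]

theorem condMarginal_mem_stdSimplex {P : (I → R) → ℝ} {A : Finset (I → R)}
    (hP : ∀ x ∈ A, 0 ≤ P x) (hA : 0 < ∑ x ∈ A, P x) (i : I) :
    condMarginal P A i ∈ stdSimplex ℝ R :=
  (convex_pi (s := univ) fun _ _ => convex_stdSimplex ℝ R).centerMass_mem hP hA
    (fun x _ i _ => pointMasses_mem_stdSimplex x i) i (mem_univ i)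

variable [Fintype I]

theorem sum_relEntropy_condMarginal_le {m : I → R → ℝ} (hm : ∀ j r, 0 < m j r)
    {A : Finset (I → R)} (hA : A.Nonempty) :
    ∑ i, relEntropy (condMarginal (fun x => ∏ j, m j (x j)) A i) (m i) ≤
      -Real.log (∑ x ∈ A, ∏ j, m j (x j)) := by
  classical
  obtain ⟨P, hPdef⟩ : ∃ P : (I → R) → ℝ, P = fun x => ∏ j, m j (x j) := ⟨_, rfl⟩
  rw [← hPdef]
  have hP : ∀ x, 0 < P x := fun x => hPdef ▸ Finset.prod_pos fun j _ => hm j _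
  have hPA : 0 < ∑ x ∈ A, P x := Finset.sum_pos (fun x _ => hP x) hA
  set g := condMarginal P A
  have hg : ∀ i, g i ∈ stdSimplex ℝ R := condMarginal_mem_stdSimplex (fun x _ => (hP x).le) hPA
  have hgpos : ∀ x ∈ A, ∀ i, 0 < g i (x i) := fun x hx i => condMarginal_pos (fun y _ => hP y) hx i
  have hgibbs := sum_mul_sub_sum_mul_log_le_log_sum (s := A) (fun x _ => hP x)
    (fun x _ => (div_pos (hP x) hPA).le) (by rw [← Finset.sum_div, div_self hPA.ne'])
    fun x => ∑ i, Real.log (g i (x i) / m i (x i))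
  have henergy : ∑ x ∈ A, P x / (∑ y ∈ A, P y) * ∑ i, Real.log (g i (x i) / m i (x i)) =
      ∑ i, relEntropy (g i) (m i) := by
    simp_rw [Finset.mul_sum]
    rw [Finset.sum_comm]
    exact Finset.sum_congr rfl fun i _ =>
      (sum_condMarginal_mul P A i fun r => Real.log (g i r / m i r)).symm
  have hentropy : ∑ x ∈ A, P x / (∑ y ∈ A, P y) * Real.log (P x / (∑ y ∈ A, P y) / P x) =
      -Real.log (∑ x ∈ A, P x) := by
    simp_rw [div_div_cancel_left' (hP _).ne', Real.log_inv]
    rw [← Finset.sum_mul, ← Finset.sum_div, div_self hPA.ne', one_mul]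
  have hexp : ∀ x ∈ A, P x * Real.exp (∑ i, Real.log (g i (x i) / m i (x i))) =
      ∏ i, g i (x i) := fun x hx => by
    simp only [hPdef, Real.exp_sum, ← Finset.prod_mul_distrib]
    refine Finset.prod_congr rfl fun i _ => ?_
    rw [Real.exp_log (div_pos (hgpos x hx i) (hm i _)), mul_div_cancel₀ _ (hm i _).ne']
  have hpartition : ∑ x ∈ A, ∏ i, g i (x i) ≤ 1 := by
    rw [← sum_prod_eq_one fun i => (hg i).2]
    exact Finset.sum_le_univ_sum_of_nonneg fun x => Finset.prod_nonneg fun i _ => (hg i).1 _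
  rw [henergy, hentropy, Finset.sum_congr rfl hexp, sub_neg_eq_add] at hgibbs
  have hlog : Real.log (∑ x ∈ A, ∏ i, g i (x i)) ≤ 0 := Real.log_nonpos
    (Finset.sum_nonneg fun x _ => Finset.prod_nonneg fun i _ => (hg i).1 _) hpartition
  linarith

end Configurations

section MeanFieldBound

variable {I R : Type*} [Fintype I] [DecidableEq I] [Fintype R] [DecidableEq R] {v : ℕ}
  {G : SimpleGraph (Fin v)} [DecidableRel G.Adj]

theorem sum_prod_mul_injectiveBlockPolynomial (w : I → I → ℝ) {g : I → R → ℝ}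
    (hg : ∀ j, ∑ r, g j r = 1) (t : ℝ) :
    ∑ x : I → R, (∏ j, g j (x j)) * injectiveBlockPolynomial G w (t • pointMasses x) =
      injectiveBlockPolynomial G w (t • g) := by
  simp only [injectiveBlockPolynomial, Finset.mul_sum]
  rw [Finset.sum_comm]
  refine Finset.sum_congr rfl fun i hi => ?_
  rw [Finset.sum_comm]
  refine Finset.sum_congr rfl fun r _ => ?_
  have hmean := sum_prod_mul_prod_comp_injective hg (Finset.mem_filter.1 hi).2
    fun _ s => if r = s then t else 0
  simp only [mul_ite, mul_zero, Finset.sum_ite_eq, Finset.mem_univ, if_true] at hmean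
  simp only [Pi.smul_apply, pointMasses, smul_eq_mul, Pi.single_apply, mul_ite, mul_one, mul_zero,
    mul_comm t (g _ _)]
  rw [← hmean, Finset.mul_sum]
  exact Finset.sum_congr rfl fun x _ => mul_left_comm _ _ _

theorem mul_injectiveBlockPolynomial_sub_sum_relEntropy_le (w : I → I → ℝ) {g m : I → R → ℝ}
    (hm : ∀ j r, 0 < m j r) (hg : ∀ j, g j ∈ stdSimplex ℝ R) (τ t : ℝ) :
    τ * injectiveBlockPolynomial G w (t • g) - ∑ j, relEntropy (g j) (m j) ≤
      Real.log (∑ x : I → R, (∏ j, m j (x j)) *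
        Real.exp (τ * injectiveBlockPolynomial G w (t • pointMasses x))) := by
  have hg1 : ∀ j, ∑ r, g j r = 1 := fun j => (hg j).2
  rw [← sum_prod_mul_injectiveBlockPolynomial w hg1,
    ← relEntropy_prod (fun j r => (hm j r).ne') hg1, Finset.mul_sum]
  simp_rw [mul_left_comm τ]
  exact sum_mul_sub_sum_mul_log_le_log_sum (fun x _ => Finset.prod_pos fun j _ => hm j _)
    (fun x _ => Finset.prod_nonneg fun j _ => (hg j).1 _) (sum_prod_eq_one hg1) _

end MeanFieldBound

section RelativeEntropy

variable {R : Type*} [Fintype R] {m : R → ℝ}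

theorem mul_log_div_eq {s : ℝ} (hs : s ≠ 0) (t : ℝ) :
    t * Real.log (t / s) = t * Real.log t - t * Real.log s := by
  rcases eq_or_ne t 0 with rfl | ht
  · simp
  · rw [Real.log_div ht hs, mul_sub]

theorem relEntropy_eq (hm : ∀ r, m r ≠ 0) (g : R → ℝ) :
    relEntropy g m = ∑ r, (g r * Real.log (g r) - g r * Real.log (m r)) :=
  Finset.sum_congr rfl fun r _ => mul_log_div_eq (hm r) (g r)

theorem continuous_relEntropy (hm : ∀ r, m r ≠ 0) : Continuous fun g => relEntropy g m := by
  simp_rw [relEntropy_eq hm]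
  exact continuous_finsetSum _ fun r _ =>
    (Real.continuous_mul_log.comp (continuous_apply r)).sub
      ((continuous_apply r).mul continuous_const)

theorem convexOn_relEntropy (hm : ∀ r, m r ≠ 0) :
    ConvexOn ℝ (stdSimplex ℝ R) fun g => relEntropy g m := by
  refine ⟨convex_stdSimplex ℝ R, fun g hg g' hg' a b ha hb hab => ?_⟩
  simp only [relEntropy_eq hm, smul_eq_mul, Finset.mul_sum, ← Finset.sum_add_distrib]
  gcongr with r
  have hconv := Real.convexOn_mul_log.2 (hg.1 r) (hg'.1 r) ha hb hab
  simp only [smul_eq_mul] at hconv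
  simp only [Pi.add_apply, Pi.smul_apply, smul_eq_mul]
  linarith

end RelativeEntropy

section ColorDensities

variable {α R : Type*} [MeasurableSpace α] [Fintype R] {ρ : Measure α} {m : R → ℝ}
  {f : α → R → ℝ}

/-- The class `ℱ_c` over an arbitrary space and set of colours. The simplex constraint is imposed
at every point, not just almost everywhere. -/
structure IsColorDensity (f : α → R → ℝ) : Prop where
  measurable : Measurable f
  mem_stdSimplex : ∀ u, f u ∈ stdSimplex ℝ R

theorem IsColorDensity.isUnitWeight (hf : IsColorDensity f) (r : R) :
    IsUnitWeight fun u => f u r where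
  measurable := (measurable_pi_apply r).comp hf.measurable
  nonneg u := (hf.mem_stdSimplex u).1 r
  le_one u := (mem_Icc_of_mem_stdSimplex (hf.mem_stdSimplex u) r).2

theorem isColorDensity_comp {β : Type*} [MeasurableSpace β] [Countable β]
    [MeasurableSingletonClass β] {κ : α → β} (hκ : Measurable κ) {g : β → R → ℝ}
    (hg : ∀ b, g b ∈ stdSimplex ℝ R) : IsColorDensity fun u => g (κ u) :=
  ⟨(measurable_of_countable g).comp hκ, fun u => hg (κ u)⟩

theorem convex_setOf_isColorDensity : Convex ℝ {f : α → R → ℝ | IsColorDensity f} :=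
  fun _ hf _ hf' a b ha hb hab =>
    ⟨(hf.measurable.const_smul a).add (hf'.measurable.const_smul b), fun u =>
      convex_stdSimplex ℝ R (hf.mem_stdSimplex u) (hf'.mem_stdSimplex u) ha hb hab⟩

/-- The mean relative entropy of the colour density `f` with respect to the prior weights `m`. -/
noncomputable def colorEntropy (ρ : Measure α) (m : R → ℝ) (f : α → R → ℝ) : ℝ :=
  ∫ u, relEntropy (f u) m ∂ρ

theorem colorEntropy_nonneg (hm : ∀ r, 0 < m r) (hm1 : ∑ r, m r = 1) (hf : IsColorDensity f) :
    0 ≤ colorEntropy ρ m f :=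
  integral_nonneg fun u => relEntropy_nonneg hm hm1 (hf.mem_stdSimplex u)

variable [IsFiniteMeasure ρ]

theorem IsColorDensity.integrable (hf : IsColorDensity f) : Integrable f ρ :=
  Integrable.of_eval fun r => (hf.isUnitWeight r).integrable

theorem IsColorDensity.integrable_relEntropy (hm : ∀ r, m r ≠ 0) (hf : IsColorDensity f) :
    Integrable (fun u => relEntropy (f u) m) ρ := by
  obtain ⟨B, hB⟩ := (isCompact_stdSimplex ℝ R).exists_bound_of_continuousOn
    (continuous_relEntropy hm).continuousOn
  exact .of_bound ((continuous_relEntropy hm).measurable.comp hf.measurable).aestronglyMeasurable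
    B (.of_forall fun u => hB _ (hf.mem_stdSimplex u))

end ColorDensities

section CellMeans

variable {α R : Type*} [MeasurableSpace α] {ρ : Measure α} {n : ℕ} {ι : α → Fin n}

theorem IsEquipartition.setAverage_eq {E : Type*} [NormedAddCommGroup E] [NormedSpace ℝ E]
    (hι : IsEquipartition ρ ι) (f : α → E) (i : Fin n) :
    ⨍ u in ι ⁻¹' {i}, f u ∂ρ = (n : ℝ) • ∫ u in ι ⁻¹' {i}, f u ∂ρ := by
  rw [MeasureTheory.setAverage_eq, hι.measureReal_preimage, inv_inv]

theorem IsEquipartition.sum_setAverage (hι : IsEquipartition ρ ι) {F : α → ℝ}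
    (hF : Integrable F ρ) : ∑ i, ⨍ u in ι ⁻¹' {i}, F u ∂ρ = n * ∫ u, F u ∂ρ := by
  have hunion : ∫ u in ⋃ i, ι ⁻¹' {i}, F u ∂ρ = ∑ i, ∫ u in ι ⁻¹' {i}, F u ∂ρ :=
    integral_iUnion_fintype (fun i => hι.measurable (measurableSet_singleton i))
      (fun i j hij => (disjoint_singleton.2 hij).preimage ι) fun i => hF.integrableOn
  rw [← preimage_iUnion, iUnion_of_singleton, preimage_univ, setIntegral_univ] at hunion
  simp_rw [hι.setAverage_eq, smul_eq_mul]
  rw [hunion, Finset.mul_sum]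

theorem cellMass_comp (hι : IsEquipartition ρ ι) (g : Fin n → R → ℝ) :
    cellMass ρ ι (fun u => g (ι u)) = (n : ℝ)⁻¹ • g := by
  ext i r
  rw [cellMass, setIntegral_congr_fun (g := fun _ => g i r)
    (hι.measurable (measurableSet_singleton i)) fun u hu => by simp only [mem_singleton_iff.1 hu],
    setIntegral_const, hι.measureReal_preimage]
  rfl

variable [IsFiniteMeasure ρ]

theorem IsEquipartition.measure_preimage_ne_zero (hι : IsEquipartition ρ ι) (i : Fin n) :
    ρ (ι ⁻¹' {i}) ≠ 0 := by
  rw [← measureReal_ne_zero_iff, hι.measureReal_preimage]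
  exact inv_ne_zero (Nat.cast_ne_zero.2 i.pos.ne')

variable [Fintype R]

theorem colorEntropy_comp (hι : IsEquipartition ρ ι) (m : R → ℝ) (g : Fin n → R → ℝ) :
    n * colorEntropy ρ m (fun u => g (ι u)) = ∑ i, relEntropy (g i) m := by
  rw [colorEntropy, ← hι.sum_setAverage
    (integrable_comp_of_finite (fun i => relEntropy (g i) m) hι.measurable)]
  refine Finset.sum_congr rfl fun i _ => ?_
  rw [setAverage_congr_fun (g := fun _ => relEntropy (g i) m)
    (hι.measurable (measurableSet_singleton i)) (.of_forall fun u hu => by rw [hu.symm]),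
    setAverage_const (hι.measure_preimage_ne_zero i) (measure_ne_top ρ _)]

variable {m : R → ℝ} {f : α → R → ℝ}

theorem setAverage_mem_stdSimplex (hι : IsEquipartition ρ ι) (hf : IsColorDensity f) (i : Fin n) :
    ⨍ u in ι ⁻¹' {i}, f u ∂ρ ∈ stdSimplex ℝ R :=
  (convex_stdSimplex ℝ R).set_average_mem (isClosed_stdSimplex ℝ R) (hι.measure_preimage_ne_zero i)
    (measure_ne_top ρ _) (.of_forall hf.mem_stdSimplex) hf.integrable.integrableOn

theorem cellMass_eq_inv_smul_setAverage (hι : IsEquipartition ρ ι) (hf : IsColorDensity f) :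
    cellMass ρ ι f = (n : ℝ)⁻¹ • fun i => ⨍ u in ι ⁻¹' {i}, f u ∂ρ := by
  ext i r
  rw [Pi.smul_apply, hι.setAverage_eq, inv_smul_smul₀ (Nat.cast_ne_zero.2 i.pos.ne'),
    eval_integral fun r => (hf.isUnitWeight r).integrable.integrableOn, cellMass]

theorem sum_relEntropy_setAverage_le (hm : ∀ r, m r ≠ 0) (hι : IsEquipartition ρ ι)
    (hf : IsColorDensity f) :
    ∑ i, relEntropy (⨍ u in ι ⁻¹' {i}, f u ∂ρ) m ≤ n * colorEntropy ρ m f := by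
  rw [colorEntropy, ← hι.sum_setAverage (hf.integrable_relEntropy hm)]
  exact Finset.sum_le_sum fun i _ => (convexOn_relEntropy hm).map_set_average_le
    (continuous_relEntropy hm).continuousOn (isClosed_stdSimplex ℝ R)
    (hι.measure_preimage_ne_zero i) (measure_ne_top ρ _) (.of_forall hf.mem_stdSimplex)
    hf.integrable.integrableOn (hf.integrable_relEntropy hm).integrableOn

end CellMeans

section FreeEnergyBounds

variable {α R : Type*} [MeasurableSpace α] [Fintype R] [DecidableEq R] {ρ : Measure α} {v n : ℕ}
  {G : SimpleGraph (Fin v)} [DecidableRel G.Adj]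

/-- The quantity `Z_n^{(2)}(θ)` for the prior weights `m`, with the expectation written as a sum
over configurations. -/
noncomputable def pottsFreeEnergy (G : SimpleGraph (Fin v)) [DecidableRel G.Adj] (m : R → ℝ)
    (Q : Fin n → Fin n → ℝ) (θ : ℝ) : ℝ :=
  (n : ℝ)⁻¹ * Real.log (∑ x : Fin n → R, (∏ j, m (x j)) *
    Real.exp (n * θ * injectiveBlockPolynomial G Q ((n : ℝ)⁻¹ • pointMasses x)))

variable {ι : α → Fin n} {Q : Fin n → Fin n → ℝ} {m : R → ℝ} {Φ : (α → R → ℝ) → ℝ} {E δ : ℝ}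

theorem sub_colorEntropy_le_pottsFreeEnergy_add [IsFiniteMeasure ρ] (hn : n ≠ 0)
    (hm : ∀ r, 0 < m r) (hι : IsEquipartition ρ ι)
    (hE : ∀ f, IsColorDensity f →
      |injectiveBlockPolynomial G Q (cellMass ρ ι f) - Φ f| ≤ E)
    (θ : ℝ) {f : α → R → ℝ} (hf : IsColorDensity f) :
    θ * Φ f - colorEntropy ρ m f ≤ pottsFreeEnergy G m Q θ + |θ| * E := by
  have hn0 : (0 : ℝ) < n := by positivity
  set T := injectiveBlockPolynomial G Q (cellMass ρ ι f) with hT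
  have hmean : n * θ * T - ∑ i, relEntropy (⨍ u in ι ⁻¹' {i}, f u ∂ρ) m ≤
      n * pottsFreeEnergy G m Q θ := by
    rw [pottsFreeEnergy, mul_inv_cancel_left₀ hn0.ne', hT, cellMass_eq_inv_smul_setAverage hι hf]
    exact mul_injectiveBlockPolynomial_sub_sum_relEntropy_le Q (fun _ => hm)
      (setAverage_mem_stdSimplex hι hf) (n * θ) _
  have hjensen := sum_relEntropy_setAverage_le (fun r => (hm r).ne') hι hf
  have hdiscrete : θ * T - colorEntropy ρ m f ≤ pottsFreeEnergy G m Q θ :=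
    le_of_mul_le_mul_left (by linarith) hn0
  have hclose : θ * (Φ f - T) ≤ |θ| * E := by
    refine (le_abs_self _).trans ?_
    rw [abs_mul, abs_sub_comm]
    gcongr
    exact hE f hf
  linarith

theorem sum_prod_le_exp_neg_colorEntropy [IsFiniteMeasure ρ] (hm : ∀ r, 0 < m r)
    (hι : IsEquipartition ρ ι) {A : Finset (Fin n → R)} (hA : A.Nonempty) :
    ∑ x ∈ A, ∏ j, m (x j) ≤ Real.exp
      (-(n * colorEntropy ρ m fun u => condMarginal (fun x => ∏ j, m (x j)) A (ι u))) := by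
  have hpos : 0 < ∑ x ∈ A, ∏ j, m (x j) :=
    Finset.sum_pos (fun x _ => Finset.prod_pos fun j _ => hm _) hA
  rw [colorEntropy_comp hι, ← Real.log_le_iff_le_exp hpos, le_neg]
  exact sum_relEntropy_condMarginal_le (fun _ => hm) hA

theorem abs_injectiveBlockPolynomial_pointMasses_sub_le (hι : IsEquipartition ρ ι)
    (hE : ∀ f, IsColorDensity f →
      |injectiveBlockPolynomial G Q (cellMass ρ ι f) - Φ f| ≤ E)
    {x : Fin n → R} {f : α → R → ℝ} (hδ : |Φ (fun u => pointMasses x (ι u)) - Φ f| ≤ δ) :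
    |injectiveBlockPolynomial G Q ((n : ℝ)⁻¹ • pointMasses x) - Φ f| ≤ E + δ := by
  have hstat := hE _ (isColorDensity_comp hι.measurable (pointMasses_mem_stdSimplex x))
  rw [cellMass_comp hι] at hstat
  exact (abs_sub_le _ _ _).trans (add_le_add hstat hδ)

/-- The energy is almost constant on `K`, and the relative entropy of `A` is bounded by that of its
vector of one-site marginals, which lies in `K` again by convexity. -/
theorem sum_mul_exp_le_of_mem_convex [IsFiniteMeasure ρ] (hm : ∀ r, 0 < m r)
    (hι : IsEquipartition ρ ι)
    (hE : ∀ f, IsColorDensity f →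
      |injectiveBlockPolynomial G Q (cellMass ρ ι f) - Φ f| ≤ E)
    {K : Set (α → R → ℝ)} (hK : Convex ℝ K) (hδ : ∀ f ∈ K, ∀ f' ∈ K, |Φ f - Φ f'| ≤ δ)
    {θ z : ℝ} (hz : ∀ f, IsColorDensity f → θ * Φ f - colorEntropy ρ m f ≤ z)
    {A : Finset (Fin n → R)} (hAK : ∀ x ∈ A, (fun u => pointMasses x (ι u)) ∈ K) :
    ∑ x ∈ A, (∏ j, m (x j)) *
        Real.exp (n * θ * injectiveBlockPolynomial G Q ((n : ℝ)⁻¹ • pointMasses x)) ≤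
      Real.exp (n * (z + |θ| * (E + δ))) := by
  rcases A.eq_empty_or_nonempty with rfl | hA
  · simpa using (Real.exp_pos _).le
  have hP : ∀ x : Fin n → R, 0 < ∏ j, m (x j) := fun x => Finset.prod_pos fun j _ => hm _
  have hPA : 0 < ∑ x ∈ A, ∏ j, m (x j) := Finset.sum_pos (fun x _ => hP x) hA
  set f : α → R → ℝ := fun u => condMarginal (fun x => ∏ j, m (x j)) A (ι u)
  have hfK : f ∈ K := condMarginal_comp_mem_of_convex (fun x _ => (hP x).le) hPA hK hAK
  have hf : IsColorDensity f :=
    isColorDensity_comp hι.measurable (condMarginal_mem_stdSimplex (fun x _ => (hP x).le) hPA)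
  have henergy : ∀ x ∈ A, n * θ * injectiveBlockPolynomial G Q ((n : ℝ)⁻¹ • pointMasses x) ≤
      n * (θ * Φ f + |θ| * (E + δ)) := fun x hx => by
    have hdiff :=
      abs_injectiveBlockPolynomial_pointMasses_sub_le hι hE (hδ _ (hAK x hx) f hfK)
    have hθ := (le_abs_self _).trans_eq (abs_mul θ _) |>.trans
      (mul_le_mul_of_nonneg_left hdiff (abs_nonneg θ))
    rw [mul_assoc]
    gcongr
    linarith
  calc ∑ x ∈ A, (∏ j, m (x j)) *
        Real.exp (n * θ * injectiveBlockPolynomial G Q ((n : ℝ)⁻¹ • pointMasses x))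
      ≤ ∑ x ∈ A, (∏ j, m (x j)) * Real.exp (n * (θ * Φ f + |θ| * (E + δ))) :=
        Finset.sum_le_sum fun x hx =>
          mul_le_mul_of_nonneg_left (Real.exp_le_exp.2 (henergy x hx)) (hP x).le
    _ ≤ Real.exp (-(n * colorEntropy ρ m f)) * Real.exp (n * (θ * Φ f + |θ| * (E + δ))) := by
        rw [← Finset.sum_mul]
        gcongr
        exact sum_prod_le_exp_neg_colorEntropy hm hι hA
    _ = Real.exp (n * (θ * Φ f - colorEntropy ρ m f + |θ| * (E + δ))) := by
        rw [← Real.exp_add]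
        ring_nf
    _ ≤ Real.exp (n * (z + |θ| * (E + δ))) := by
        gcongr
        exact hz f hf

theorem pottsFreeEnergy_le [IsFiniteMeasure ρ] [Nonempty R] (hn : n ≠ 0) (hm : ∀ r, 0 < m r)
    (hι : IsEquipartition ρ ι)
    (hE : ∀ f, IsColorDensity f →
      |injectiveBlockPolynomial G Q (cellMass ρ ι f) - Φ f| ≤ E)
    {𝒦 : Finset (Set (α → R → ℝ))} (hconvex : ∀ K ∈ 𝒦, Convex ℝ K)
    (hcover : ∀ f, IsColorDensity f → ∃ K ∈ 𝒦, f ∈ K)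
    (hδ : ∀ K ∈ 𝒦, ∀ f ∈ K, ∀ f' ∈ K, |Φ f - Φ f'| ≤ δ)
    {θ z : ℝ} (hz : ∀ f, IsColorDensity f → θ * Φ f - colorEntropy ρ m f ≤ z) :
    pottsFreeEnergy G m Q θ ≤ z + |θ| * (E + δ) + (n : ℝ)⁻¹ * Real.log 𝒦.card := by
  classical
  have hn0 : (0 : ℝ) < n := by positivity
  have hclass : ∀ x : Fin n → R, ∃ K ∈ 𝒦, (fun u => pointMasses x (ι u)) ∈ K := fun x =>
    hcover _ (isColorDensity_comp hι.measurable (pointMasses_mem_stdSimplex x))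
  choose k hk𝒦 hk using hclass
  set F : (Fin n → R) → ℝ := fun x => (∏ j, m (x j)) *
    Real.exp (n * θ * injectiveBlockPolynomial G Q ((n : ℝ)⁻¹ • pointMasses x))
  have hF : 0 < ∑ x, F x := Finset.sum_pos
    (fun x _ => mul_pos (Finset.prod_pos fun j _ => hm _) (Real.exp_pos _)) Finset.univ_nonempty
  have hcard : (0 : ℝ) < 𝒦.card :=
    Nat.cast_pos.2 (Finset.card_pos.2 ⟨k fun _ => Classical.arbitrary R, hk𝒦 _⟩)
  have hsum : ∑ x, F x ≤ 𝒦.card * Real.exp (n * (z + |θ| * (E + δ))) := by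
    rw [← Finset.sum_fiberwise_of_maps_to (fun x _ => hk𝒦 x) F, ← nsmul_eq_mul]
    refine Finset.sum_le_card_nsmul _ _ _ fun K hK => ?_
    refine sum_mul_exp_le_of_mem_convex hm hι hE (hconvex K hK) (hδ K hK) hz fun x hx => ?_
    exact (Finset.mem_filter.1 hx).2 ▸ hk x
  have hlog := Real.log_le_log hF hsum
  rw [Real.log_mul hcard.ne' (Real.exp_ne_zero _), Real.log_exp] at hlog
  calc pottsFreeEnergy G m Q θ ≤ (n : ℝ)⁻¹ * (Real.log 𝒦.card + n * (z + |θ| * (E + δ))) :=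
        mul_le_mul_of_nonneg_left hlog (inv_nonneg.2 hn0.le)
    _ = z + |θ| * (E + δ) + (n : ℝ)⁻¹ * Real.log 𝒦.card := by
        field_simp
        ring

end FreeEnergyBounds

section ConvexCover

variable {α β R : Type*} [MeasurableSpace α] [Fintype R] {ρ : Measure α} {v : ℕ}
  {G : SimpleGraph (Fin v)} [DecidableRel G.Adj] {U W : α → α → ℝ} {ε δ : ℝ} {κ : α → β}

/-- Every colour density lies in one of finitely many convex classes, on each of which the
functional `Φ` oscillates by at most `δ`. -/
def HasConvexCover (Φ : (α → R → ℝ) → ℝ) (δ : ℝ) : Prop :=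
  ∃ 𝒦 : Finset (Set (α → R → ℝ)), (∀ K ∈ 𝒦, Convex ℝ K) ∧
    (∀ f, IsColorDensity f → ∃ K ∈ 𝒦, f ∈ K) ∧ ∀ K ∈ 𝒦, ∀ f ∈ K, ∀ f' ∈ K, |Φ f - Φ f'| ≤ δ

theorem HasConvexCover.exists_abs_le {Φ : (α → R → ℝ) → ℝ} (h : HasConvexCover Φ δ) :
    ∃ B, ∀ f, IsColorDensity f → |Φ f| ≤ B := by
  obtain ⟨𝒦, -, hcover, hδ⟩ := h
  have hbounded : Bornology.IsBounded (⋃ K ∈ 𝒦, Φ '' K) := by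
    refine (Bornology.isBounded_biUnion_finset 𝒦).2 fun K hK => Metric.isBounded_iff.2 ⟨δ, ?_⟩
    rintro _ ⟨f, hf, rfl⟩ _ ⟨f', hf', rfl⟩
    exact hδ K hK f hf f' hf'
  obtain ⟨B, hB⟩ := hbounded.exists_norm_le
  refine ⟨B, fun f hf => ?_⟩
  obtain ⟨K, hK, hfK⟩ := hcover f hf
  exact hB _ (mem_biUnion hK (mem_image_of_mem Φ hfK))

theorem HomDensityClose.abs_colorDensity_sub_le (h : HomDensityClose ρ G U W ε) {f : α → R → ℝ}
    (hf : IsColorDensity f) :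
    |colorDensity ρ G U f - colorDensity ρ G W f| ≤ Fintype.card R * ε := by
  rw [colorDensity, colorDensity, ← Finset.sum_sub_distrib, ← nsmul_eq_mul]
  exact (Finset.abs_sum_le_sum_abs _ _).trans
    (Finset.sum_le_card_nsmul _ _ _ fun r _ => h _ (hf.isUnitWeight r))

theorem cellMass_mem_Icc [IsProbabilityMeasure ρ] {f : α → R → ℝ} (hf : IsColorDensity f) :
    cellMass ρ κ f ∈ Icc (0 : β → R → ℝ) 1 := by
  refine ⟨fun b r => integral_nonneg (hf.isUnitWeight r).nonneg, fun b r => ?_⟩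
  calc cellMass ρ κ f b r ≤ ∫ u, f u r ∂ρ := setIntegral_le_integral
        (hf.isUnitWeight r).integrable (.of_forall (hf.isUnitWeight r).nonneg)
    _ ≤ ∫ _, 1 ∂ρ := integral_mono (hf.isUnitWeight r).integrable (integrable_const 1)
        (hf.isUnitWeight r).le_one
    _ = 1 := by simp

theorem convex_setOf_cellMass_mem [IsFiniteMeasure ρ] {s : Set (β → R → ℝ)} (hs : Convex ℝ s) :
    Convex ℝ {f | IsColorDensity f ∧ cellMass ρ κ f ∈ s} := by
  rintro f ⟨hf, hfs⟩ f' ⟨hf', hfs'⟩ a b ha hb hab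
  refine ⟨convex_setOf_isColorDensity hf hf' ha hb hab, ?_⟩
  have hlinear : cellMass ρ κ (a • f + b • f') = a • cellMass ρ κ f + b • cellMass ρ κ f' := by
    ext i r
    simp only [cellMass, Pi.add_apply, Pi.smul_apply, smul_eq_mul]
    rw [integral_add ((hf.isUnitWeight r).integrable.integrableOn.const_mul a)
      ((hf'.isUnitWeight r).integrable.integrableOn.const_mul b), integral_const_mul,
      integral_const_mul]
  exact hlinear ▸ hs hfs hfs' ha hb hab

theorem continuous_blockPolynomial [Fintype β] (w : β → β → ℝ) :
    Continuous fun m : β → R → ℝ => blockPolynomial G w m := by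
  unfold blockPolynomial
  fun_prop

theorem hasConvexCover_colorDensity [IsProbabilityMeasure ρ] [Finite β] [MeasurableSpace β]
    [MeasurableSingletonClass β] (hκ : Measurable κ) {w : β → β → ℝ}
    (hclose : HomDensityClose ρ G W (pullbackKernel κ w) ε) (hδ : 0 < δ) :
    HasConvexCover (R := R) (colorDensity ρ G W) (2 * (Fintype.card R * ε) + δ) := by
  classical
  cases nonempty_fintype β
  have hcompact : IsCompact (Icc (0 : β → R → ℝ) 1) := isCompact_Icc
  obtain ⟨τ, hτ, hunif⟩ := Metric.uniformContinuousOn_iff.1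
    (hcompact.uniformContinuousOn_of_continuous
      (continuous_blockPolynomial (G := G) w).continuousOn) δ hδ
  obtain ⟨t, -, ht, hcover⟩ := hcompact.finite_cover_balls (half_pos hτ)
  let cell (y : β → R → ℝ) : Set (α → R → ℝ) :=
    {f | IsColorDensity f ∧ cellMass ρ κ f ∈ Metric.ball y (τ / 2)}
  refine ⟨ht.toFinset.image cell, ?_, fun f hf => ?_, ?_⟩
  · simp only [Finset.forall_mem_image]
    exact fun y _ => convex_setOf_cellMass_mem (convex_ball y _)
  · obtain ⟨y, hy, hfy⟩ := mem_iUnion₂.1 (hcover (cellMass_mem_Icc (ρ := ρ) (κ := κ) hf))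
    exact ⟨_, Finset.mem_image_of_mem _ (ht.mem_toFinset.2 hy), hf, hfy⟩
  · simp only [Finset.forall_mem_image]
    rintro y - f ⟨hf, hfy⟩ f' ⟨hf', hfy'⟩
    have hdist : dist (cellMass ρ κ f) (cellMass ρ κ f') < τ :=
      (dist_triangle_right _ _ y).trans_lt
        ((add_lt_add (Metric.mem_ball.1 hfy) (Metric.mem_ball.1 hfy')).trans_eq (add_halves τ))
    have hblock := hunif _ (cellMass_mem_Icc hf) _ (cellMass_mem_Icc hf') hdist
    rw [Real.dist_eq, ← colorDensity_pullbackKernel hκ w fun r => (hf.isUnitWeight r).integrable,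
      ← colorDensity_pullbackKernel hκ w fun r => (hf'.isUnitWeight r).integrable] at hblock
    have hf_close := abs_le.1 (hclose.abs_colorDensity_sub_le hf)
    have hf'_close := abs_le.1 (hclose.abs_colorDensity_sub_le hf')
    rw [abs_le]
    constructor <;> linarith [abs_lt.1 hblock, hf_close.1, hf_close.2, hf'_close.1, hf'_close.2]

end ConvexCover

section LaplacePrinciple

variable {α R : Type*} [MeasurableSpace α] [Fintype R] {ρ : Measure α} {m : R → ℝ}
  {Φ : (α → R → ℝ) → ℝ}

/-- The values of the Potts variational problem with energy `Φ`, prior weights `m` and inverse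
temperature `θ`; their supremum is the limiting free energy. -/
def variationalValues (ρ : Measure α) (m : R → ℝ) (Φ : (α → R → ℝ) → ℝ) (θ : ℝ) : Set ℝ :=
  {z | ∃ f, IsColorDensity f ∧ z = θ * Φ f - colorEntropy ρ m f}

theorem nonempty_variationalValues (hm : ∀ r, 0 < m r) (hm1 : ∑ r, m r = 1) (θ : ℝ) :
    (variationalValues ρ m Φ θ).Nonempty :=
  ⟨_, fun _ => m, ⟨measurable_const, fun _ => ⟨fun r => (hm r).le, hm1⟩⟩, rfl⟩

theorem bddAbove_variationalValues (hm : ∀ r, 0 < m r) (hm1 : ∑ r, m r = 1) {B : ℝ}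
    (hB : ∀ f, IsColorDensity f → |Φ f| ≤ B) (θ : ℝ) :
    BddAbove (variationalValues ρ m Φ θ) := by
  refine ⟨|θ| * B, ?_⟩
  rintro _ ⟨f, hf, rfl⟩
  calc θ * Φ f - colorEntropy ρ m f ≤ θ * Φ f := sub_le_self _ (colorEntropy_nonneg hm hm1 hf)
    _ ≤ |θ| * |Φ f| := (le_abs_self _).trans_eq (abs_mul _ _)
    _ ≤ |θ| * B := by gcongr; exact hB f hf

theorem tendsto_pottsFreeEnergy [IsFiniteMeasure ρ] [DecidableEq R] {v : ℕ}
    {G : SimpleGraph (Fin v)} [DecidableRel G.Adj] {I : Type*} {l : Filter I} {n : I → ℕ}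
    (hn : Tendsto n l atTop) {ι : ∀ k, α → Fin (n k)} {Q : ∀ k, Fin (n k) → Fin (n k) → ℝ}
    (hm : ∀ r, 0 < m r) (hm1 : ∑ r, m r = 1) (hι : ∀ k, IsEquipartition ρ (ι k))
    (hE : ∀ ε > 0, ∀ᶠ k in l, ∀ f, IsColorDensity f →
      |injectiveBlockPolynomial G (Q k) (cellMass ρ (ι k) f) - Φ f| ≤ ε)
    (hcover : ∀ δ > 0, HasConvexCover Φ δ) (θ : ℝ) :
    Tendsto (fun k => pottsFreeEnergy G m (Q k) θ) l (nhds (sSup (variationalValues ρ m Φ θ))) := by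
  have : Nonempty R := not_isEmpty_iff.1 fun _ => by simp at hm1
  obtain ⟨B, hB⟩ := (hcover 1 one_pos).exists_abs_le
  have hbdd := bddAbove_variationalValues (ρ := ρ) hm hm1 hB θ
  rw [Metric.tendsto_nhds]
  intro ε hε
  obtain ⟨τ, hτ, hθτ⟩ : ∃ τ > 0, |θ| * (τ + τ) ≤ ε / 2 := by
    refine ⟨ε / (4 * (|θ| + 1)), by positivity, ?_⟩
    have hratio : |θ| / (|θ| + 1) ≤ 1 := (div_le_one (by positivity)).2 (by linarith)
    calc |θ| * (ε / (4 * (|θ| + 1)) + ε / (4 * (|θ| + 1))) = ε / 2 * (|θ| / (|θ| + 1)) := by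
          field_simp; ring
      _ ≤ ε / 2 := mul_le_of_le_one_right (by positivity) hratio
  obtain ⟨𝒦, hconvex, hcover, hosc⟩ := hcover τ hτ
  have hcard : Tendsto (fun k => (n k : ℝ)⁻¹ * Real.log 𝒦.card) l (nhds 0) := by
    simpa using (tendsto_inv_atTop_nhds_zero_nat.comp hn).mul_const (Real.log 𝒦.card)
  filter_upwards [hE τ hτ, hn.eventually_ne_atTop 0, hcard.eventually_lt_const (half_pos hε)]
    with k hEk hnk hcardk
  have hlower : sSup (variationalValues ρ m Φ θ) ≤ pottsFreeEnergy G m (Q k) θ + |θ| * τ := by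
    refine csSup_le (nonempty_variationalValues hm hm1 θ) ?_
    rintro _ ⟨f, hf, rfl⟩
    exact sub_colorEntropy_le_pottsFreeEnergy_add hnk hm (hι k) hEk θ hf
  have hupper := pottsFreeEnergy_le hnk hm (hι k) hEk hconvex hcover hosc
    fun f hf => le_csSup hbdd ⟨f, hf, rfl⟩
  rw [Real.dist_eq, abs_lt]
  constructor <;> linarith [mul_nonneg (abs_nonneg θ) hτ.le]

end LaplacePrinciple

section CutConvergence

variable {α R : Type*} [MeasurableSpace α] [Fintype R] {ρ : Measure α} [IsProbabilityMeasure ρ]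
  {v : ℕ} {G : SimpleGraph (Fin v)} [DecidableRel G.Adj] {D : ℕ} {q : ℝ} {C : ℝ≥0}
  {W : α → α → ℝ} {n : ℕ → ℕ} {ι : ∀ k, α → Fin (n k)} {Q : ∀ k, Fin (n k) → Fin (n k) → ℝ}
  {η : ℕ → ℝ}

theorem eventually_abs_injectiveBlockPolynomial_sub_colorDensity_le (hD : 0 < D)
    (hG : G.maxDegree ≤ D) (hq : 1 < q) (hW : Measurable (Function.uncurry W))
    (hWC : eLpNorm (Function.uncurry W) (ENNReal.ofReal q * D) (ρ.prod ρ) ≤ C)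
    (hn : Tendsto n atTop atTop) (hι : ∀ k, IsEquipartition ρ (ι k))
    (hQC : ∀ᶠ k in atTop,
      eLpNorm (Function.uncurry (pullbackKernel (ι k) (Q k))) (ENNReal.ofReal q * D) (ρ.prod ρ) ≤ C)
    (hη : Tendsto η atTop (nhds 0))
    (hcut : ∀ k, CutNormLE ρ (Function.uncurry (pullbackKernel (ι k) (Q k)) - Function.uncurry W)
      (η k)) {ε : ℝ} (hε : 0 < ε) :
    ∀ᶠ k in atTop, ∀ f : α → R → ℝ, IsColorDensity f →
      |injectiveBlockPolynomial G (Q k) (cellMass ρ (ι k) f) - colorDensity ρ G W f| ≤ ε := by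
  obtain ⟨τ, hτ, hτε⟩ : ∃ τ > 0, Fintype.card R * τ + Fintype.card R * τ + τ = ε :=
    ⟨ε / (2 * Fintype.card R + 1), by positivity, by field_simp; ring⟩
  obtain ⟨η₀, hη₀, hcount⟩ := exists_cutNormLE_imp_homDensityClose (ρ := ρ) hD hG hq C hτ
  filter_upwards [hQC, hn.eventually (eventually_noninjectiveWeight_le (ρ := ρ) hD hG hq C hτ),
    hη.eventually_le_const hη₀] with k hQCk hweight hηk f hf
  have hclose := hcount _ W (measurable_pullbackKernel (hι k).measurable (Q k)) hW hQCk hWC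
    fun A B hA hB => (hcut k A B hA hB).trans hηk
  calc |injectiveBlockPolynomial G (Q k) (cellMass ρ (ι k) f) - colorDensity ρ G W f|
      ≤ _ := abs_sub_le _ (colorDensity ρ G (pullbackKernel (ι k) (Q k)) f) _
    _ ≤ Fintype.card R * noninjectiveWeight G (Q k) + Fintype.card R * τ := add_le_add
        (abs_injectiveBlockPolynomial_cellMass_sub_colorDensity_le (hι k) (Q k) hf.isUnitWeight)
        (hclose.abs_colorDensity_sub_le hf)
    _ ≤ ε := by
        linarith [mul_le_mul_of_nonneg_left (hweight (ι k) (Q k) (hι k) hQCk)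
          (Nat.cast_nonneg (α := ℝ) (Fintype.card R))]

theorem hasConvexCover_colorDensity_of_eLpNorm_le [MeasurableSpace.CountablyGenerated α]
    (hD : 0 < D) (hG : G.maxDegree ≤ D) (hq : 1 < q) (hW : Measurable (Function.uncurry W))
    (hWC : eLpNorm (Function.uncurry W) (ENNReal.ofReal q * D) (ρ.prod ρ) ≤ C)
    {δ : ℝ} (hδ : 0 < δ) : HasConvexCover (R := R) (colorDensity ρ G W) δ := by
  have hp : 1 ≤ ENNReal.ofReal q * D := one_le_ofReal_mul_natCast hD hq.le
  have hWint : Integrable (Function.uncurry W) (ρ.prod ρ) :=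
    MemLp.integrable hp ⟨hW.aestronglyMeasurable, hWC.trans_lt ENNReal.coe_lt_top⟩
  obtain ⟨τ, hτ, hτδ⟩ : ∃ τ > 0, 2 * (Fintype.card R * τ) + τ = δ :=
    ⟨δ / (2 * Fintype.card R + 1), by positivity, by field_simp⟩
  obtain ⟨η₀, hη₀, hcount⟩ := exists_cutNormLE_imp_homDensityClose (ρ := ρ) hD hG hq C hτ
  obtain ⟨N, hN⟩ := exists_cutNormLE_sub_blockAverage hW hWint hη₀
  have hκ := measurable_generatingCode (α := α) N
  let w : (Fin N → Prop) → (Fin N → Prop) → ℝ := fun b b' =>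
    cellAverage (ρ.prod ρ) (Prod.map (generatingCode N) (generatingCode N)) (Function.uncurry W)
      (b, b')
  have hclose : HomDensityClose ρ G W (pullbackKernel (generatingCode N) w) τ :=
    hcount W (pullbackKernel (generatingCode N) w) hW (measurable_blockAverage hκ) hWC
      ((eLpNorm_blockAverage_le hκ hWint hp).trans hWC) hN
  exact hτδ ▸ hasConvexCover_colorDensity hκ hclose hτ

theorem tendsto_pottsFreeEnergy_of_cutNormLE [MeasurableSpace.CountablyGenerated α] [DecidableEq R]
    {m : R → ℝ} (hm : ∀ r, 0 < m r) (hm1 : ∑ r, m r = 1) (hD : 0 < D)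
    (hG : G.maxDegree ≤ D) (hq : 1 < q) (hW : Measurable (Function.uncurry W))
    (hWint : Integrable (Function.uncurry W) (ρ.prod ρ))
    (hn : Tendsto n atTop atTop) (hι : ∀ k, IsEquipartition ρ (ι k))
    (hQC : ∀ᶠ k in atTop,
      eLpNorm (Function.uncurry (pullbackKernel (ι k) (Q k))) (ENNReal.ofReal q * D) (ρ.prod ρ) ≤ C)
    (hη : Tendsto η atTop (nhds 0))
    (hcut : ∀ k, CutNormLE ρ (Function.uncurry (pullbackKernel (ι k) (Q k)) - Function.uncurry W)
      (η k)) (θ : ℝ) :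
    Tendsto (fun k => pottsFreeEnergy G m (Q k) θ) atTop
      (nhds (sSup (variationalValues ρ m (colorDensity ρ G W) θ))) := by
  have hWC := eLpNorm_le_of_tendsto_cutNormLE
    (fun k => integrable_pullbackKernel (hι k).measurable (Q k)) hW hWint hη hcut
    (one_le_ofReal_mul_natCast hD hq.le) hQC
  exact tendsto_pottsFreeEnergy hn hm hm1 hι
    (fun _ => eventually_abs_injectiveBlockPolynomial_sub_colorDensity_le hD hG hq hW hWC hn hι
      hQC hη hcut)
    (fun _ => hasConvexCover_colorDensity_of_eLpNorm_le hD hG hq hW hWC) θ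

end CutConvergence

section PottsModel

variable {c v : ℕ} {G : SimpleGraph (Fin v)} [DecidableRel G.Adj]

theorem ZnGen_Ustat_monoPhi_eq (hv : 0 < v) (μ : Measure (Fin c)) [IsProbabilityMeasure μ]
    (Q : ∀ n : ℕ, Fin n → Fin n → ℝ) (n : ℕ) (θ : ℝ) :
    ZnGen μ (fun n => Ustat G (monoPhi c v) n (Q n)) n θ =
      pottsFreeEnergy G (fun r => μ.real {r}) (Q n) θ := by
  rw [ZnGen, pottsFreeEnergy, integral_fintype Integrable.of_finite]
  simp only [Measure.real, Measure.pi_singleton, ENNReal.toReal_prod, smul_eq_mul,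
    Ustat_monoPhi_eq hv]

theorem colorDensity_congr_ae {α R : Type*} [MeasurableSpace α] [Fintype R] {ρ : Measure α}
    [SigmaFinite ρ] {f g : α → R → ℝ} (h : f =ᵐ[ρ] g) (U : α → α → ℝ) :
    colorDensity ρ G U f = colorDensity ρ G U g := by
  refine Finset.sum_congr rfl fun r _ => integral_congr_ae ?_
  filter_upwards [ae_all_iff.2 fun a =>
    (Measure.quasiMeasurePreserving_eval (fun _ : Fin v => ρ) a).ae h] with x hx
  simp only [hx]

theorem colorEntropy_congr_ae {α R : Type*} [MeasurableSpace α] [Fintype R] {ρ : Measure α}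
    {f g : α → R → ℝ} (h : f =ᵐ[ρ] g) (m : R → ℝ) :
    colorEntropy ρ m f = colorEntropy ρ m g :=
  integral_congr_ae (h.fun_comp fun y => relEntropy y m)

theorem IsColorDensity.mem_Fc {f : ℝ → Fin c → ℝ} (hf : IsColorDensity f) : f ∈ Fc c :=
  ⟨hf.measurable, fun u _ r => mem_Icc_of_mem_stdSimplex (hf.mem_stdSimplex u) r,
    fun u _ => (hf.mem_stdSimplex u).2⟩

theorem exists_isColorDensity_ae_eq {f : ℝ → Fin c → ℝ} (hf : f ∈ Fc c) :
    ∃ g, IsColorDensity g ∧ f =ᵐ[unif01] g := by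
  obtain ⟨hmeas, hIcc, hsum⟩ := hf
  have h01 : (0 : ℝ) ≤ 1 := zero_le_one
  refine ⟨fun u => f (projIcc 0 1 h01 u),
    ⟨hmeas.comp (continuous_subtype_val.comp continuous_projIcc).measurable, fun u => ?_⟩, ?_⟩
  · have hu := (projIcc 0 1 h01 u).2
    exact ⟨fun r => (hIcc _ hu r).1, hsum _ hu⟩
  · filter_upwards [ae_restrict_mem measurableSet_Icc] with u hu
    rw [projIcc_of_mem _ hu]

theorem setOf_Fc_eq_variationalValues (μ : Measure (Fin c)) (W : ℝ → ℝ → ℝ) (θ : ℝ) :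
    {z : ℝ | ∃ f ∈ Fc c, z = θ * G2 c G W f - entPotts c μ f} =
      variationalValues unif01 (fun r => μ.real {r}) (colorDensity unif01 G W) θ := by
  ext z
  constructor
  · rintro ⟨f, hf, rfl⟩
    obtain ⟨g, hg, hfg⟩ := exists_isColorDensity_ae_eq hf
    refine ⟨g, hg, ?_⟩
    rw [← colorDensity_congr_ae hfg, ← colorEntropy_congr_ae hfg]
    rfl
  · rintro ⟨f, hf, rfl⟩
    exact ⟨f, hf.mem_Fc, rfl⟩

theorem kerNorm_stepKernel_mono {n : ℕ} (Q : Fin n → Fin n → ℝ) {p p' : ℝ≥0∞} (h : p ≤ p') :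
    kerNorm (stepKernel n Q) p ≤ kerNorm (stepKernel n Q) p' := by
  refine eLpNorm_le_eLpNorm_of_exponent_le h (Measurable.aestronglyMeasurable ?_)
  exact Finset.measurable_sum _ fun i _ => Finset.measurable_sum _ fun j _ =>
    .ite ((measurable_fst measurableSet_Ioc).inter (measurable_snd measurableSet_Ioc))
      measurable_const measurable_const

variable {R : Type*} [Fintype R] [DecidableEq R] {m : R → ℝ}
  {Q : ∀ n : ℕ, Fin n → Fin n → ℝ} {W : ℝ → ℝ → ℝ}

theorem tendsto_pottsFreeEnergy_of_maxDegree_pos (hm : ∀ r, 0 < m r) (hm1 : ∑ r, m r = 1)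
    (hG : 0 < G.maxDegree) (hW : Measurable (Function.uncurry W))
    (hWint : Integrable (Function.uncurry W) (unif01.prod unif01))
    (hcut : Tendsto (fun n => weakCutDist (stepKernel n (Q n)) W) atTop (nhds 0))
    {q : ℝ≥0∞} (hq : 1 < q)
    (hnorm : atTop.limsup (fun n => kerNorm (stepKernel n (Q n)) (q * G.maxDegree)) ≠ ⊤) (θ : ℝ) :
    Tendsto (fun n => pottsFreeEnergy G m (Q n) θ) atTop
      (nhds (sSup (variationalValues unif01 m (colorDensity unif01 G W) θ))) := by
  obtain ⟨r, hr, hrq⟩ := ENNReal.lt_iff_exists_nnreal_btwn.1 hq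
  obtain ⟨C, hC, -⟩ := ENNReal.lt_iff_exists_nnreal_btwn.1 hnorm.lt_top
  choose ι hι hιnorm hιcut using fun k : ℕ =>
    exists_isEquipartition_cutNormLE (k + 1) (Q (k + 1)) hWint (Nat.one_div_pos_of_nat (n := k))
  have hbound : ∀ᶠ k in atTop, kerNorm (pullbackKernel (ι k) (Q (k + 1)))
      (ENNReal.ofReal r * G.maxDegree) ≤ C := by
    filter_upwards [(tendsto_add_atTop_nat 1).eventually (eventually_lt_of_limsup_lt hC)] with k hk
    rw [hιnorm, ENNReal.ofReal_coe_nnreal]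
    exact (kerNorm_stepKernel_mono _ (by gcongr)).trans hk.le
  have herror := (hcut.comp (tendsto_add_atTop_nat 1)).add
    (tendsto_one_div_add_atTop_nhds_zero_nat (𝕜 := ℝ))
  rw [add_zero] at herror
  rw [← tendsto_add_atTop_iff_nat 1]
  exact tendsto_pottsFreeEnergy_of_cutNormLE hm hm1 hG le_rfl (by exact_mod_cast hr) hW hWint
    (tendsto_add_atTop_nat 1) hι hbound herror hιcut θ

theorem edgeProd_eq_one_of_maxDegree_eq_zero (hG : G.maxDegree = 0) (F : Fin v → Fin v → ℝ) :
    edgeProd G F = 1 := by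
  refine Finset.prod_eq_one fun p hp => absurd (G.degree_le_maxDegree p.1) ?_
  rw [hG, not_le, G.degree_pos_iff_exists_adj]
  exact ⟨_, (Finset.mem_filter.1 hp).2.1⟩

/-- Without edges the kernels are irrelevant and can be replaced by zero. -/
theorem tendsto_pottsFreeEnergy_of_maxDegree_eq_zero (hm : ∀ r, 0 < m r) (hm1 : ∑ r, m r = 1)
    (hG : G.maxDegree = 0) (θ : ℝ) :
    Tendsto (fun n => pottsFreeEnergy G m (Q n) θ) atTop
      (nhds (sSup (variationalValues unif01 m (colorDensity unif01 G W) θ))) := by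
  have hzero := tendsto_pottsFreeEnergy_of_cutNormLE (G := G) (ρ := unif01) (D := 1) (q := 2)
    (C := 0) (n := fun k => k + 1) (ι := fun k => intervalIndex (k + 1)) (Q := fun _ => 0) (W := 0)
    (η := 0) hm hm1 one_pos (by omega) one_lt_two measurable_const (integrable_zero _ _ _)
    (tendsto_add_atTop_nat 1) (fun _ => isEquipartition_intervalIndex)
    (.of_forall fun _ => eLpNorm_zero.le) tendsto_const_nhds
    (fun _ _ _ _ _ => by simp [pullbackKernel, Function.uncurry_def]) θ
  rw [← tendsto_add_atTop_iff_nat 1]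
  simpa only [pottsFreeEnergy, injectiveBlockPolynomial, variationalValues, colorDensity,
    homDensity, edgeProd_eq_one_of_maxDegree_eq_zero hG] using hzero

end PottsModel

theorem potts_gibbs_log_partition_limit_general
    (c : ℕ) (μ : Measure (Fin c)) [IsProbabilityMeasure μ]
    (hpos : ∀ r : Fin c, 0 < μ {r})
    {v : ℕ} (hv : 0 < v) (G : SimpleGraph (Fin v)) [DecidableRel G.Adj]
    (Q : ∀ n : ℕ, Fin n → Fin n → ℝ)
    (W : ℝ → ℝ → ℝ) (hWmeas : Measurable (Function.uncurry W)) (hWL1 : kerNorm W 1 ≠ ⊤)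
    (hcut : Tendsto (fun n => weakCutDist (stepKernel n (Q n)) W) atTop (nhds 0))
    (q : ℝ≥0∞) (hq : 1 < q)
    (hnorm : Filter.atTop.limsup
        (fun n => kerNorm (stepKernel n (Q n)) (q * (G.maxDegree : ℝ≥0∞))) ≠ ⊤)
    (θ : ℝ) :
    Tendsto (fun n => ZnGen μ (fun n => Ustat G (monoPhi c v) n (Q n)) n θ) atTop
      (nhds (sSup {z : ℝ | ∃ f ∈ Fc c, z = θ * G2 c G W f - entPotts c μ f})) := by
  have hm : ∀ r, 0 < μ.real {r} := fun r => ENNReal.toReal_pos (hpos r).ne' (measure_ne_top _ _)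
  have hm1 : ∑ r, μ.real {r} = 1 := by simp
  have hWint : Integrable (Function.uncurry W) (unif01.prod unif01) :=
    memLp_one_iff_integrable.1 ⟨hWmeas.aestronglyMeasurable, hWL1.lt_top⟩
  rw [setOf_Fc_eq_variationalValues]
  simp_rw [ZnGen_Ustat_monoPhi_eq hv]
  rcases G.maxDegree.eq_zero_or_pos with hG | hG
  · exact tendsto_pottsFreeEnergy_of_maxDegree_eq_zero hm hm1 hG θ
  · exact tendsto_pottsFreeEnergy_of_maxDegree_pos hm hm1 hG hWmeas hWint hcut hq hnorm θ

/-- Theorem 1.4 (i): limit of the Potts log-normalizing constant. -/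
theorem potts_gibbs_log_partition_limit
    (c : ℕ) (μ : Measure (Fin c)) [IsProbabilityMeasure μ]
    (hpos : ∀ r : Fin c, 0 < μ {r})
    {v : ℕ} (hv : 2 ≤ v) (G : SimpleGraph (Fin v)) [DecidableRel G.Adj]
    (Q : ∀ n : ℕ, Fin n → Fin n → ℝ)
    (hQsymm : ∀ n i j, Q n i j = Q n j i) (hQzero : ∀ n i, Q n i i = 0)
    (W : ℝ → ℝ → ℝ) (hWmeas : Measurable (Function.uncurry W))
    (hWsymm : ∀ x y, W x y = W y x) (hWL1 : kerNorm W 1 ≠ ⊤)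
    (hcut : Tendsto (fun n => weakCutDist (stepKernel n (Q n)) W) atTop (nhds 0))
    (q : ℝ≥0∞) (hq : 1 < q)
    (hnorm : Filter.atTop.limsup
        (fun n => kerNorm (stepKernel n (Q n)) (q * (G.maxDegree : ℝ≥0∞))) ≠ ⊤)
    (θ : ℝ) :
    Tendsto (fun n => ZnGen μ (fun n => Ustat G (monoPhi c v) n (Q n)) n θ) atTop
      (nhds (sSup {z : ℝ | ∃ f ∈ Fc c, z = θ * G2 c G W f - entPotts c μ f})) := by
  exact potts_gibbs_log_partition_limit_general c μ hpos (by omega) G Q W hWmeas hWL1 hcut q hq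
    hnorm θ
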